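/- arXiv:2108.07751 — 12 statements merged into one kernel-verified Lean document; each statement's English description precedes it below -/
import Mathlib

section
/- Let R₁, …, Rₙ (n ≥ 2) be axis-aligned rectangles in ℝ² whose corner coordinates are all integers, and suppose that whenever i ≠ j and Rᵢ = Rⱼ, the rectangle Rᵢ contains more than one point (i.e., no two of the rectangles are identical single points). Then there exists a selection p₁, …, pₙ with pᵢ ∈ Rᵢ such that for all i ≠ j and every ℓ ∈ {1, 2, ∞}, d_ℓ(pᵢ, pⱼ) ≥ 1/n. -/
open Set

/-- The `L₁` distance on `ℝ²`. -/
noncomputable def d1 (p q : ℝ × ℝ) : ℝ := |p.1 - q.1| + |p.2 - q.2|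

/-- The Euclidean (`L₂`) distance on `ℝ²`. -/
noncomputable def d2 (p q : ℝ × ℝ) : ℝ := Real.sqrt ((p.1 - q.1) ^ 2 + (p.2 - q.2) ^ 2)

/-- The `L∞` distance on `ℝ²`. -/
noncomputable def dinf (p q : ℝ × ℝ) : ℝ := max |p.1 - q.1| |p.2 - q.2|

/-- The axis-aligned rectangle `[a,b] × [c,d]`. -/
def rect (a b c d : ℝ) : Set (ℝ × ℝ) := Set.Icc a b ×ˢ Set.Icc c d

theorem stmt1 (n : ℕ) (hn : 2 ≤ n) (lo hi bo tp : Fin n → ℤ)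
    (hx : ∀ i, lo i ≤ hi i) (hy : ∀ i, bo i ≤ tp i)
    (hdup : ∀ i j, i ≠ j →
      rect (lo i : ℝ) (hi i : ℝ) (bo i : ℝ) (tp i : ℝ) =
        rect (lo j : ℝ) (hi j : ℝ) (bo j : ℝ) (tp j : ℝ) →
      ∃ x ∈ rect (lo i : ℝ) (hi i : ℝ) (bo i : ℝ) (tp i : ℝ),
        ∃ y ∈ rect (lo i : ℝ) (hi i : ℝ) (bo i : ℝ) (tp i : ℝ), x ≠ y) :
    ∃ p : Fin n → ℝ × ℝ,
      (∀ i, p i ∈ rect (lo i : ℝ) (hi i : ℝ) (bo i : ℝ) (tp i : ℝ)) ∧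
      ∀ i j, i ≠ j →
        (1 / n : ℝ) ≤ d1 (p i) (p j) ∧
        (1 / n : ℝ) ≤ d2 (p i) (p j) ∧
        (1 / n : ℝ) ≤ dinf (p i) (p j) := by
  classical
  have hn0 : (0 : ℤ) < n := by exact_mod_cast (by omega : 0 < n)
  have hnR : (0 : ℝ) < n := by exact_mod_cast (by omega : 0 < n)
  let T : Fin n → Finset (ℤ × ℤ) := fun i =>
    Finset.Icc ((n : ℤ) * lo i) (n * hi i) ×ˢ Finset.Icc ((n : ℤ) * bo i) (n * tp i)
  have hall : ∀ s : Finset (Fin n), s.card ≤ (s.biUnion T).card := by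
    intro s
    by_cases h : ∃ i ∈ s, lo i < hi i ∨ bo i < tp i
    · obtain ⟨i, his, hi'⟩ := h
      have h1 : s.card ≤ n := by simpa using Finset.card_le_univ s
      have h2 : (T i).card ≤ (s.biUnion T).card :=
        Finset.card_le_card (Finset.subset_biUnion_of_mem T his)
      have h3 : n ≤ (T i).card := by
        simp only [T, Finset.card_product, Int.card_Icc]
        have ha : 0 ≤ (n : ℤ) * (hi i - lo i) := mul_nonneg hn0.le (by linarith [hx i])
        have hb : 0 ≤ (n : ℤ) * (tp i - bo i) := mul_nonneg hn0.le (by linarith [hy i])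
        have hA : 1 ≤ ((n : ℤ) * hi i + 1 - n * lo i).toNat := by
          have : 1 ≤ (n : ℤ) * hi i + 1 - n * lo i := by linarith
          omega
        have hB : 1 ≤ ((n : ℤ) * tp i + 1 - n * bo i).toNat := by
          have : 1 ≤ (n : ℤ) * tp i + 1 - n * bo i := by linarith
          omega
        rcases hi' with h | h
        · have : n ≤ ((n : ℤ) * hi i + 1 - n * lo i).toNat := by
            have : (n : ℤ) ≤ (n : ℤ) * hi i + 1 - n * lo i := by nlinarith
            omega
          nlinarith
        · have : n ≤ ((n : ℤ) * tp i + 1 - n * bo i).toNat := by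
            have : (n : ℤ) ≤ (n : ℤ) * tp i + 1 - n * bo i := by nlinarith
            omega
          nlinarith
      omega
    · push Not at h
      apply Finset.card_le_card_of_injOn (fun i => ((n : ℤ) * lo i, (n : ℤ) * bo i))
      · intro i his
        have := hx i
        have := hy i
        simp only [Finset.coe_biUnion, Set.mem_iUnion]
        refine ⟨i, his, ?_⟩
        simp only [T, Finset.mem_coe, Finset.mem_product, Finset.mem_Icc]
        refine ⟨⟨le_rfl, ?_⟩, ⟨le_rfl, ?_⟩⟩ <;> nlinarith
      · intro i his j hjs hij
        by_contra hne
        simp only [Prod.mk.injEq] at hij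
        have e1 : lo i = lo j := mul_left_cancel₀ hn0.ne' hij.1
        have e2 : bo i = bo j := mul_left_cancel₀ hn0.ne' hij.2
        have a1 : hi i = lo i := le_antisymm (h i his).1 (hx i)
        have a2 : tp i = bo i := le_antisymm (h i his).2 (hy i)
        have b1 : hi j = lo j := le_antisymm (h j hjs).1 (hx j)
        have b2 : tp j = bo j := le_antisymm (h j hjs).2 (hy j)
        obtain ⟨x, hx', y, hy', hxy⟩ := hdup i j hne (by rw [a1, a2, b1, b2, e1, e2])
        rw [a1, a2] at hx' hy'
        simp only [rect, Set.Icc_self, Set.mem_prod, Set.mem_singleton_iff] at hx' hy'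
        exact hxy (Prod.ext (hx'.1.trans hy'.1.symm) (hx'.2.trans hy'.2.symm))
  obtain ⟨f, hf, hfT⟩ := (Finset.all_card_le_biUnion_card_iff_exists_injective T).1 hall
  refine ⟨fun i => (((f i).1 : ℝ) / n, ((f i).2 : ℝ) / n), ?_, ?_⟩
  · intro i
    have := hfT i
    simp only [T, Finset.mem_product, Finset.mem_Icc] at this
    obtain ⟨⟨h1, h2⟩, h3, h4⟩ := this
    simp only [rect, Set.mem_prod, Set.mem_Icc, le_div_iff₀ hnR, div_le_iff₀ hnR]
    refine ⟨⟨?_, ?_⟩, ?_, ?_⟩ <;> rw [mul_comm] <;> exact_mod_cast by assumption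
  · intro i j hij
    have key : ∀ a b : ℤ, a ≠ b → (1 / n : ℝ) ≤ |(a : ℝ) / n - (b : ℝ) / n| := by
      intro a b hab
      rw [← sub_div, abs_div, abs_of_pos hnR]
      have : (1 : ℤ) ≤ |a - b| := Int.one_le_abs (sub_ne_zero.2 hab)
      have : (1 : ℝ) ≤ |(a : ℝ) - b| := by exact_mod_cast this
      gcongr
    have hinf : (1 / n : ℝ) ≤ dinf (((f i).1 : ℝ) / n, ((f i).2 : ℝ) / n)
        (((f j).1 : ℝ) / n, ((f j).2 : ℝ) / n) := by
      have hne : f i ≠ f j := fun h => hij (hf h)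
      by_cases h1 : (f i).1 = (f j).1
      · have h2 : (f i).2 ≠ (f j).2 := fun h => hne (Prod.ext h1 h)
        exact (key _ _ h2).trans (le_max_right _ _)
      · exact (key _ _ h1).trans (le_max_left _ _)
    refine ⟨hinf.trans ?_, hinf.trans ?_, hinf⟩
    · unfold dinf d1
      exact max_le (le_add_of_nonneg_right (abs_nonneg _)) (le_add_of_nonneg_left (abs_nonneg _))
    · unfold dinf d2
      refine max_le (Real.abs_le_sqrt ?_) (Real.abs_le_sqrt ?_)
      · exact le_add_of_nonneg_right (sq_nonneg _)
      · exact le_add_of_nonneg_left (sq_nonneg _)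
end

section
/- Let R₁, …, Rₙ (n ≥ 2) be axis-aligned rectangles in ℝ², where Rᵢ = [ℓᵢ, rᵢ] × [bᵢ, tᵢ]. Then the optimal value δ*_∞ for the L_∞ distance equals (tᵢ − bⱼ)/k or (rᵢ − ℓⱼ)/k for some indices i ≠ j and some integer k with 1 ≤ k ≤ n. -/
open Set

/-- The minimum pairwise distance of the points `p 0, …, p (n-1)` with respect to
the distance function `d`. -/
noncomputable def minPairDist {n : ℕ} (d : (ℝ × ℝ) → (ℝ × ℝ) → ℝ)
    (p : Fin n → ℝ × ℝ) : ℝ :=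
  sInf {x : ℝ | ∃ i j : Fin n, i ≠ j ∧ x = d (p i) (p j)}

/-- The set of values of selections from the rectangles `R i`:
the minimum pairwise distance over selections, with respect to `d`. -/
noncomputable def selVals {n : ℕ} (d : (ℝ × ℝ) → (ℝ × ℝ) → ℝ)
    (R : Fin n → Set (ℝ × ℝ)) : Set ℝ :=
  {v : ℝ | ∃ p : Fin n → ℝ × ℝ, (∀ i, p i ∈ R i) ∧ v = minPairDist d p}

open Filter Topology

/-- tight chains of length `k` -/
def TChain {n : ℕ} (lo x : Fin n → ℝ) (δ : ℝ) : ℕ → Fin n → Prop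
  | 0, i => x i = lo i
  | k + 1, j => ∃ i, TChain lo x δ k i ∧ x j - x i = δ

lemma tchain_spec {n : ℕ} (lo x : Fin n → ℝ) (δ : ℝ) (hδ : 0 < δ) (k : ℕ) :
    ∀ i, TChain lo x δ k i → (∃ a, x a = lo a ∧ x i = lo a + k * δ) ∧
      k + 1 ≤ (Finset.univ.filter (fun j => x j ≤ x i)).card := by
  induction k with
  | zero =>
    intro i h
    refine ⟨⟨i, h, by simpa using (show x i = lo i from h)⟩, ?_⟩
    have : 0 < (Finset.univ.filter (fun j => x j ≤ x i)).card :=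
      Finset.card_pos.2 ⟨i, by simp⟩
    omega
  | succ k ih =>
    rintro j ⟨i, hi, hij⟩
    obtain ⟨⟨a, ha, hxa⟩, hc⟩ := ih i hi
    refine ⟨⟨a, ha, by push_cast; linarith⟩, ?_⟩
    have : (Finset.univ.filter (fun l => x l ≤ x i)).card <
        (Finset.univ.filter (fun l => x l ≤ x j)).card := by
      apply Finset.card_lt_card
      rw [Finset.ssubset_iff_of_subset]
      · exact ⟨j, by simp, by simp; linarith⟩
      · intro l hl
        simp at hl ⊢
        linarith
    omega

lemma exists_rank {n : ℕ} (lo hi x : Fin n → ℝ) (δ : ℝ) (hδ : 0 < δ)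
    (hne : ∀ i j : Fin n, ∀ k : ℕ, i ≠ j → 1 ≤ k → k ≤ n → δ ≠ (hi i - lo j) / k) :
    ∃ r : Fin n → ℝ, (∀ i j, x j - x i = δ → r i + 1 ≤ r j) ∧
      (∀ i, x i = lo i → 0 ≤ r i) ∧ (∀ i, x i = hi i → r i ≤ 0) := by
  classical
  have key : ∀ k i, TChain lo x δ (k + 1) i → x i ≠ hi i := by
    intro k i h e
    obtain ⟨⟨a, ha, hxa⟩, hc⟩ := tchain_spec lo x δ hδ (k + 1) i h
    have hn := hc.trans (Finset.card_le_univ _)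
    rw [Fintype.card_fin] at hn
    have hk : (0 : ℝ) < ((k + 1 : ℕ) : ℝ) := by positivity
    refine hne i a (k + 1) ?_ (by omega) (by omega) ?_
    · rintro rfl
      have := mul_pos hk hδ
      linarith
    · rw [eq_div_iff hk.ne']
      linarith
  obtain ⟨m, hm⟩ : ∃ m, ∀ i, m ≤ x i := by
    obtain ⟨m, hm⟩ := (Set.finite_range x).bddBelow
    exact ⟨m, fun i => hm ⟨i, rfl⟩⟩
  obtain ⟨M, hM⟩ : ∃ m, ∀ i, x i ≤ m := by
    obtain ⟨m, hm⟩ := (Set.finite_range x).bddAbove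
    exact ⟨m, fun i => hm ⟨i, rfl⟩⟩
  have hup : ∀ i, 0 ≤ (x i - m) / δ := fun i => div_nonneg (by linarith [hm i]) hδ.le
  have hdn : ∀ i, (x i - M) / δ ≤ 0 := fun i =>
    div_nonpos_of_nonpos_of_nonneg (by linarith [hM i]) hδ.le
  have hst : ∀ i j c, x j - x i = δ → (x j - c) / δ = (x i - c) / δ + 1 := by
    intro i j c h
    rw [show x j = x i + δ by linarith]
    field_simp
    ring
  let r : Fin n → ℝ := fun i =>
    if x i = lo i ∧ x i = hi i then 0
    else if ∃ k, TChain lo x δ k i then (x i - m) / δ + 1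
    else (x i - M) / δ - 1
  have r1 : ∀ i, (x i = lo i ∧ x i = hi i) → r i = 0 := fun i h => if_pos h
  have r2 : ∀ i, ¬ (x i = lo i ∧ x i = hi i) → (∃ k, TChain lo x δ k i) →
      r i = (x i - m) / δ + 1 := fun i h h' => by
    show ite _ _ _ = _
    rw [if_neg h, if_pos h']
  have r3 : ∀ i, ¬ (x i = lo i ∧ x i = hi i) → (¬ ∃ k, TChain lo x δ k i) →
      r i = (x i - M) / δ - 1 := fun i h h' => by
    show ite _ _ _ = _
    rw [if_neg h, if_neg h']
  refine ⟨r, ?_, ?_, ?_⟩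
  · intro i j hij
    by_cases hA : ∃ k, TChain lo x δ k i
    · obtain ⟨k, hk⟩ := hA
      have hj : TChain lo x δ (k + 1) j := ⟨i, hk, hij⟩
      have hjh := key k j hj
      rw [r2 j (fun h => hjh h.2) ⟨_, hj⟩]
      by_cases hD : x i = lo i ∧ x i = hi i
      · rw [r1 i hD]
        linarith [hup j]
      · rw [r2 i hD ⟨k, hk⟩, hst i j m hij]
    · have hD : ¬ (x i = lo i ∧ x i = hi i) := fun h => hA ⟨0, h.1⟩
      rw [r3 i hD hA]
      by_cases hDj : x j = lo j ∧ x j = hi j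
      · rw [r1 j hDj]; linarith [hdn i]
      · by_cases hAj : ∃ k, TChain lo x δ k j
        · rw [r2 j hDj hAj]; linarith [hdn i, hup j]
        · rw [r3 j hDj hAj, hst i j M hij]; linarith
  · intro i h
    by_cases hD : x i = lo i ∧ x i = hi i
    · rw [r1 i hD]
    · rw [r2 i hD ⟨0, h⟩]; linarith [hup i]
  · intro i h
    by_cases hD : x i = lo i ∧ x i = hi i
    · rw [r1 i hD]
    · rw [r3 i hD]
      · linarith [hdn i]
      · rintro ⟨k, hk⟩
        cases k with
        | zero => exact hD ⟨hk, h⟩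
        | succ k => exact key k i hk h

lemma ev_nonneg (a b : ℝ) (ha : 0 ≤ a) (hb : a = 0 → 0 ≤ b) :
    ∀ᶠ ε in 𝓝[>] (0 : ℝ), 0 ≤ a + ε * b := by
  rcases ha.eq_or_lt with h | h
  · filter_upwards [self_mem_nhdsWithin] with ε hε
    have := mul_nonneg (le_of_lt hε) (hb h.symm)
    linarith
  · have hc : Tendsto (fun ε : ℝ => a + ε * b) (𝓝[>] 0) (𝓝 a) := by
      have : Continuous (fun ε : ℝ => a + ε * b) := by fun_prop
      have h2 := this.tendsto 0
      simp only [zero_mul, add_zero] at h2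
      exact h2.mono_left nhdsWithin_le_nhds
    filter_upwards [hc.eventually (lt_mem_nhds h)] with ε hε using hε.le

lemma ev_ne (a b : ℝ) (hb : a = 0 → b ≠ 0) :
    ∀ᶠ ε in 𝓝[>] (0 : ℝ), a + ε * b ≠ 0 := by
  by_cases h : a = 0
  · filter_upwards [self_mem_nhdsWithin] with ε hε
    rw [h, zero_add]
    exact mul_ne_zero (ne_of_gt hε) (hb h)
  · have hc : Tendsto (fun ε : ℝ => a + ε * b) (𝓝[>] 0) (𝓝 a) := by
      have : Continuous (fun ε : ℝ => a + ε * b) := by fun_prop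
      have h2 := this.tendsto 0
      simp only [zero_mul, add_zero] at h2
      exact h2.mono_left nhdsWithin_le_nhds
    exact hc.eventually_ne h

lemma perturb {n : ℕ} (lo hi x : Fin n → ℝ) (δ : ℝ) (hδ : 0 < δ)
    (h1 : ∀ i, lo i ≤ x i) (h2 : ∀ i, x i ≤ hi i)
    (hne : ∀ i j : Fin n, ∀ k : ℕ, i ≠ j → 1 ≤ k → k ≤ n → δ ≠ (hi i - lo j) / k) :
    ∃ r : Fin n → ℝ, ∀ᶠ ε in 𝓝[>] (0 : ℝ),
      (∀ i, lo i ≤ x i + ε * r i ∧ x i + ε * r i ≤ hi i) ∧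
      ∀ i j, δ ≤ |x i - x j| → δ + ε ≤ |(x i + ε * r i) - (x j + ε * r j)| := by
  obtain ⟨r, ra, rl, rh⟩ := exists_rank lo hi x δ hδ hne
  refine ⟨r, ?_⟩
  have e1 : ∀ᶠ ε in 𝓝[>] (0 : ℝ), ∀ i, 0 ≤ (x i - lo i) + ε * r i :=
    eventually_all.2 fun i => ev_nonneg _ _ (by linarith [h1 i]) fun h => rl i (by linarith)
  have e2 : ∀ᶠ ε in 𝓝[>] (0 : ℝ), ∀ i, 0 ≤ (hi i - x i) + ε * (- r i) :=
    eventually_all.2 fun i => ev_nonneg _ _ (by linarith [h2 i])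
      fun h => by linarith [rh i (by linarith)]
  have e3 : ∀ᶠ ε in 𝓝[>] (0 : ℝ), ∀ i j, δ ≤ x j - x i →
      0 ≤ (x j - x i - δ) + ε * (r j - r i - 1) :=
    eventually_all.2 fun i => eventually_all.2 fun j => by
      by_cases h : δ ≤ x j - x i
      · filter_upwards [ev_nonneg (x j - x i - δ) (r j - r i - 1) (by linarith)
          (fun h => by linarith [ra i j (by linarith)])] with ε hε _ using hε
      · exact Eventually.of_forall fun ε h' => absurd h' h
  filter_upwards [e1, e2, e3] with ε f1 f2 f3
  refine ⟨fun i => ⟨by linarith [f1 i], by linarith [f2 i]⟩, fun i j hij => ?_⟩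
  rcases le_abs.1 hij with h | h
  · have := f3 j i h
    exact le_abs.2 (Or.inl (by linarith))
  · have := f3 i j (by linarith)
    exact le_abs.2 (Or.inr (by linarith))

lemma distinct {n : ℕ} (lo hi : Fin n → ℝ) (h1 : ∀ i, lo i ≤ hi i)
    (hne : ∀ i j : Fin n, i ≠ j → hi i ≠ lo j) :
    ∃ x : Fin n → ℝ, (∀ i, lo i ≤ x i ∧ x i ≤ hi i) ∧ ∀ i j, i ≠ j → x i - x j ≠ 0 := by
  classical
  let s : Fin n → ℝ := fun i => if lo i = hi i then 0 else (i : ℝ) + 1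
  have s1 : ∀ i, lo i = hi i → s i = 0 := fun i h => if_pos h
  have s2 : ∀ i, lo i ≠ hi i → s i = (i : ℝ) + 1 := fun i h => if_neg h
  have e1 : ∀ᶠ ε in 𝓝[>] (0 : ℝ), ∀ i, 0 ≤ 0 + ε * s i :=
    eventually_all.2 fun i => ev_nonneg _ _ le_rfl fun _ => by
      by_cases h : lo i = hi i
      · rw [s1 i h]
      · rw [s2 i h]; positivity
  have e2 : ∀ᶠ ε in 𝓝[>] (0 : ℝ), ∀ i, 0 ≤ (hi i - lo i) + ε * (- s i) :=
    eventually_all.2 fun i => ev_nonneg _ _ (by linarith [h1 i])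
      fun h => by rw [s1 i (by linarith)]; simp
  have e3 : ∀ᶠ ε in 𝓝[>] (0 : ℝ), ∀ i j, i ≠ j → (lo i - lo j) + ε * (s i - s j) ≠ 0 :=
    eventually_all.2 fun i => eventually_all.2 fun j => by
      by_cases h : i = j
      · exact Eventually.of_forall fun ε h' => absurd h h'
      · filter_upwards [ev_ne (lo i - lo j) (s i - s j) (fun h' => by
          rw [s2 i (fun e => hne i j h (by linarith)),
            s2 j (fun e => hne j i (Ne.symm h) (by linarith))]
          intro e
          apply h
          have : (i : ℝ) = j := by linarith
          exact Fin.ext (by exact_mod_cast this))] with ε hε _ using hε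
  obtain ⟨ε, f1, f2, f3⟩ := (e1.and (e2.and e3)).exists
  refine ⟨fun i => lo i + ε * s i, fun i => ⟨by linarith [f1 i], by linarith [f2 i]⟩, ?_⟩
  intro i j h e
  exact f3 i j h (by linarith)

lemma offDiag_ne {n : ℕ} (hn : 2 ≤ n) : (Finset.univ : Finset (Fin n)).offDiag.Nonempty :=
  ⟨(⟨0, by omega⟩, ⟨1, by omega⟩), by simp⟩

lemma minPairDist_eq {n : ℕ} (hn : 2 ≤ n) (p : Fin n → ℝ × ℝ) :
    minPairDist dinf p = (Finset.univ : Finset (Fin n)).offDiag.inf' (offDiag_ne hn)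
      (fun q => dinf (p q.1) (p q.2)) := by
  rw [Finset.inf'_eq_csInf_image, minPairDist]
  congr 1
  ext v
  constructor
  · rintro ⟨i, j, h, rfl⟩
    exact ⟨(i, j), by simpa using h, rfl⟩
  · rintro ⟨⟨i, j⟩, h, rfl⟩
    exact ⟨i, j, by simpa using h, rfl⟩

lemma exists_opt {n : ℕ} (hn : 2 ≤ n) (lo hi bo tp : Fin n → ℝ)
    (hx : ∀ i, lo i ≤ hi i) (hy : ∀ i, bo i ≤ tp i) :
    ∃ p : Fin n → ℝ × ℝ, (∀ i, p i ∈ rect (lo i) (hi i) (bo i) (tp i)) ∧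
      sSup (selVals dinf fun i => rect (lo i) (hi i) (bo i) (tp i)) = minPairDist dinf p ∧
      ∀ q : Fin n → ℝ × ℝ, (∀ i, q i ∈ rect (lo i) (hi i) (bo i) (tp i)) →
        minPairDist dinf q ≤ minPairDist dinf p := by
  have hK : IsCompact (Set.univ.pi fun i => rect (lo i) (hi i) (bo i) (tp i)) :=
    isCompact_univ_pi fun i => isCompact_Icc.prod isCompact_Icc
  have hc : Continuous (fun p : Fin n → ℝ × ℝ => minPairDist dinf p) := by
    simp_rw [minPairDist_eq hn]
    apply Continuous.finset_inf'_apply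
    intro q _
    unfold dinf
    fun_prop
  obtain ⟨p, hp, hmax⟩ := hK.exists_isMaxOn
    ⟨fun i => (lo i, bo i), fun i _ => ⟨⟨le_rfl, hx i⟩, ⟨le_rfl, hy i⟩⟩⟩ hc.continuousOn
  have hmax' : ∀ q : Fin n → ℝ × ℝ, (∀ i, q i ∈ rect (lo i) (hi i) (bo i) (tp i)) →
        minPairDist dinf q ≤ minPairDist dinf p := fun q hq => hmax (fun i _ => hq i)
  refine ⟨p, fun i => hp i trivial, ?_, hmax'⟩
  apply IsGreatest.csSup_eq
  refine ⟨⟨p, fun i => hp i trivial, rfl⟩, ?_⟩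
  rintro v ⟨q, hq, rfl⟩
  exact hmax' q hq

theorem stmt2 (n : ℕ) (hn : 2 ≤ n) (lo hi bo tp : Fin n → ℝ)
    (hx : ∀ i, lo i ≤ hi i) (hy : ∀ i, bo i ≤ tp i) :
    ∃ i j : Fin n, ∃ k : ℕ, i ≠ j ∧ 1 ≤ k ∧ k ≤ n ∧
      (sSup (selVals dinf fun i => rect (lo i) (hi i) (bo i) (tp i))
          = (tp i - bo j) / k ∨
       sSup (selVals dinf fun i => rect (lo i) (hi i) (bo i) (tp i))
          = (hi i - lo j) / k) := by
  obtain ⟨p, hp, hsup, hmax⟩ := exists_opt hn lo hi bo tp hx hy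
  rw [hsup]
  by_contra hcon
  set δ := minPairDist dinf p with hδdef
  have hneY : ∀ i j : Fin n, ∀ k : ℕ, i ≠ j → 1 ≤ k → k ≤ n → δ ≠ (tp i - bo j) / k :=
    fun i j k a b c e => hcon ⟨i, j, k, a, b, c, Or.inl e⟩
  have hneX : ∀ i j : Fin n, ∀ k : ℕ, i ≠ j → 1 ≤ k → k ≤ n → δ ≠ (hi i - lo j) / k :=
    fun i j k a b c e => hcon ⟨i, j, k, a, b, c, Or.inr e⟩
  have hle : ∀ i j, i ≠ j → δ ≤ dinf (p i) (p j) := by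
    intro i j h
    rw [hδdef, minPairDist_eq hn]
    exact Finset.inf'_le (f := fun q : Fin n × Fin n => dinf (p q.1) (p q.2))
      (b := (i, j)) (by simpa using h)
  have hlt : ∀ q : Fin n → ℝ × ℝ, (∀ i, q i ∈ rect (lo i) (hi i) (bo i) (tp i)) →
      (∀ i j, i ≠ j → δ < dinf (q i) (q j)) → False := by
    intro q hq h
    have h1 := hmax q hq
    rw [minPairDist_eq hn q] at h1
    refine absurd h1 (not_le.2 ?_)
    rw [Finset.lt_inf'_iff]
    rintro ⟨i, j⟩ hij
    exact h i j (by simpa using hij)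
  have h0 : 0 ≤ δ := by
    rw [hδdef, minPairDist_eq hn]
    apply Finset.le_inf'
    intro q _
    exact le_max_of_le_left (abs_nonneg _)
  rcases h0.eq_or_lt with h | hpos
  · obtain ⟨x, hx1, hx2⟩ := distinct lo hi hx (fun i j hij e => by
      apply hneX i j 1 hij le_rfl (by omega)
      rw [← h, e]; simp)
    refine hlt (fun i => (x i, bo i)) (fun i => ⟨hx1 i, le_rfl, hy i⟩) ?_
    intro i j hij
    rw [← h]
    exact lt_max_of_lt_left (abs_pos.2 (hx2 i j hij))
  · obtain ⟨r, hr⟩ := perturb lo hi (fun i => (p i).1) δ hpos (fun i => (hp i).1.1)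
      (fun i => (hp i).1.2) hneX
    obtain ⟨s, hs⟩ := perturb bo tp (fun i => (p i).2) δ hpos (fun i => (hp i).2.1)
      (fun i => (hp i).2.2) hneY
    obtain ⟨ε, ⟨hr1, hr2⟩, ⟨hs1, hs2⟩, hε⟩ := (hr.and (hs.and self_mem_nhdsWithin)).exists
    have hε' : 0 < ε := hε
    refine hlt (fun i => ((p i).1 + ε * r i, (p i).2 + ε * s i))
      (fun i => ⟨hr1 i, hs1 i⟩) ?_
    intro i j hij
    rcases le_max_iff.1 (hle i j hij) with h | h
    · exact lt_max_of_lt_left (lt_of_lt_of_le (by linarith) (hr2 i j h))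
    · exact lt_max_of_lt_right (lt_of_lt_of_le (by linarith) (hs2 i j h))
end

section
/- Let R₁, …, Rₙ (n ≥ 2) be axis-aligned rectangles in ℝ², where Rᵢ = [ℓᵢ, rᵢ] × [bᵢ, tᵢ]. Then there exists a selection p₁, …, pₙ attaining the optimal value δ*_∞ for the L_∞ distance such that for every index i there are an index j and an integer k with 0 ≤ k ≤ n with x-coordinate of pᵢ equal to ℓⱼ + k·δ*_∞, and there are an index j' and an integer k' with 0 ≤ k' ≤ n with y-coordinate of pᵢ equal to b_{j'} + k'·δ*_∞. -/
open Set

lemma mpd_eq {n : ℕ} (hn : 2 ≤ n) : ∃ H : (Finset.univ : Finset (Fin n)).offDiag.Nonempty,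
    ∀ p : Fin n → ℝ × ℝ, minPairDist dinf p =
      (Finset.univ : Finset (Fin n)).offDiag.inf' H (fun q => dinf (p q.1) (p q.2)) := by
  have H : (Finset.univ : Finset (Fin n)).offDiag.Nonempty :=
    ⟨(⟨0, by omega⟩, ⟨1, by omega⟩), by simp⟩
  refine ⟨H, fun p => ?_⟩
  rw [Finset.inf'_eq_csInf_image, minPairDist]
  congr 1
  ext x
  simp only [Set.mem_ofPred_eq, Set.mem_image, Finset.mem_coe, Finset.mem_offDiag,
    Finset.mem_univ, true_and, Prod.exists]
  constructor
  · rintro ⟨i, j, h, rfl⟩; exact ⟨i, j, h, rfl⟩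
  · rintro ⟨i, j, h, rfl⟩; exact ⟨i, j, h, rfl⟩

lemma le_mpd {n : ℕ} (hn : 2 ≤ n) (p : Fin n → ℝ × ℝ) (d : ℝ) :
    d ≤ minPairDist dinf p ↔ ∀ i j, i ≠ j → d ≤ dinf (p i) (p j) := by
  obtain ⟨H, h⟩ := mpd_eq hn
  rw [h, Finset.le_inf'_iff]
  simp

lemma cont_mpd {n : ℕ} (hn : 2 ≤ n) :
    Continuous (fun p : Fin n → ℝ × ℝ => minPairDist dinf p) := by
  obtain ⟨H, h⟩ := mpd_eq hn
  simp only [h]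
  apply Continuous.finset_inf'_apply
  intro q _
  unfold dinf
  fun_prop

lemma chain {n : ℕ} (x y lo : Fin n → ℝ) (δ : ℝ) (hl : ∀ i, lo i ≤ x i)
    (hf : ∀ i j, i ≠ j → δ ≤ |x i - x j| ∨ δ ≤ |y i - y j|)
    (hm : ∀ i x', lo i ≤ x' → x' < x i → ∃ j, j ≠ i ∧ |x' - x j| < δ ∧ |y i - y j| < δ) :
    ∀ i, ∃ j, ∃ k : ℕ, k ≤ n ∧ x i = lo j + (k : ℝ) * δ := by
  have step : ∀ i, x i = lo i ∨ ∃ j, x j + δ = x i ∧ x j < x i := by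
    intro i
    by_contra hc
    push Not at hc
    obtain ⟨h1, h2⟩ := hc
    have hlt : lo i < x i := lt_of_le_of_ne (hl i) (Ne.symm h1)
    have hd : 0 < δ := by
      obtain ⟨j, -, hj, -⟩ := hm i (lo i) le_rfl hlt
      exact lt_of_le_of_lt (abs_nonneg _) hj
    let S : Finset ℝ := insert (lo i)
      ((Finset.univ.filter (fun j => x j + δ < x i)).image (fun j => x j + δ))
    have hS : S.Nonempty := ⟨lo i, by simp [S]⟩
    have hmax : S.max' hS < x i := by
      rw [Finset.max'_lt_iff]
      intro z hz
      simp only [S, Finset.mem_insert, Finset.mem_image, Finset.mem_filter, Finset.mem_univ,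
        true_and] at hz
      rcases hz with rfl | ⟨j, hj, rfl⟩
      · exact hlt
      · exact hj
    obtain ⟨j, hji, hj1, hj2⟩ := hm i (S.max' hS) (Finset.le_max' _ _ (by simp [S])) hmax
    have hxx : δ ≤ |x i - x j| := by
      rcases hf i j (Ne.symm hji) with h | h
      · exact h
      · exact absurd hj2 (not_lt.mpr h)
    rw [abs_lt] at hj1
    rcases le_abs.mp hxx with h | h
    · have h3 : x j + δ < x i := by
        refine lt_of_le_of_ne (by linarith) (fun he => ?_)
        have := h2 j he
        linarith
      have : x j + δ ≤ S.max' hS := Finset.le_max' _ _ (by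
        simp only [S, Finset.mem_insert, Finset.mem_image, Finset.mem_filter, Finset.mem_univ,
          true_and]
        exact Or.inr ⟨j, h3, rfl⟩)
      linarith
    · linarith
  have main : ∀ m : ℕ, ∀ i, (Finset.univ.filter (fun j => x j < x i)).card = m →
      ∃ j, ∃ k : ℕ, k ≤ m ∧ x i = lo j + (k : ℝ) * δ := by
    intro m
    induction m using Nat.strong_induction_on with
    | _ m ih =>
      intro i hi
      rcases step i with h | ⟨j, hj, hlt⟩
      · exact ⟨i, 0, by omega, by simp [h]⟩
      · have hc : (Finset.univ.filter (fun l => x l < x j)).card < m := by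
          rw [← hi]
          apply Finset.card_lt_card
          rw [Finset.ssubset_iff_of_subset]
          · exact ⟨j, by simp [hlt], by simp⟩
          · intro l hl'
            simp only [Finset.mem_filter, Finset.mem_univ, true_and] at hl' ⊢
            linarith
        obtain ⟨l, k, hk, he⟩ := ih _ hc j rfl
        refine ⟨l, k + 1, by omega, ?_⟩
        push_cast
        linarith
  intro i
  obtain ⟨j, k, hk, he⟩ := main _ i rfl
  refine ⟨j, k, hk.trans ?_, he⟩
  simpa using Finset.card_le_univ (Finset.univ.filter (fun j => x j < x i))

lemma dinf_comm' (p q : ℝ × ℝ) : dinf p q = dinf q p := by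
  simp only [dinf, abs_sub_comm]

/-- single-point replacement -/
lemma repl {n : ℕ} (hn : 2 ≤ n) (p : Fin n → ℝ × ℝ) (δ : ℝ)
    (lo hi bo tp : Fin n → ℝ)
    (hp : ∀ i, p i ∈ rect (lo i) (hi i) (bo i) (tp i))
    (hd : δ ≤ minPairDist dinf p)
    (hmin : ∀ q : Fin n → ℝ × ℝ, (∀ i, q i ∈ rect (lo i) (hi i) (bo i) (tp i)) →
      δ ≤ minPairDist dinf q → ∑ i, ((p i).1 + (p i).2) ≤ ∑ i, ((q i).1 + (q i).2))
    (i : Fin n) (z : ℝ × ℝ) (hz : z ∈ rect (lo i) (hi i) (bo i) (tp i))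
    (hlt : z.1 + z.2 < (p i).1 + (p i).2) : ∃ j, j ≠ i ∧ dinf z (p j) < δ := by
  by_contra hc
  push Not at hc
  have h := hmin (Function.update p i z) (by
    intro j
    by_cases hj : j = i
    · subst hj; simpa using hz
    · simpa [hj] using hp j) (by
    rw [le_mpd hn] at hd ⊢
    intro a b hab
    by_cases ha : a = i
    · subst ha
      simpa [Ne.symm hab] using hc b (Ne.symm hab)
    · by_cases hb : b = i
      · subst hb
        simpa [ha, dinf_comm'] using hc a ha
      · simpa [ha, hb] using hd a b hab)
  refine absurd h (not_le.mpr ?_)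
  apply Finset.sum_lt_sum
  · intro j _
    by_cases hj : j = i
    · subst hj; simpa using hlt.le
    · simp [hj]
  · exact ⟨i, Finset.mem_univ _, by simpa using hlt⟩

theorem stmt3 (n : ℕ) (hn : 2 ≤ n) (lo hi bo tp : Fin n → ℝ)
    (hx : ∀ i, lo i ≤ hi i) (hy : ∀ i, bo i ≤ tp i) :
    ∃ p : Fin n → ℝ × ℝ,
      (∀ i, p i ∈ rect (lo i) (hi i) (bo i) (tp i)) ∧
      IsGreatest (selVals dinf fun i => rect (lo i) (hi i) (bo i) (tp i))
        (minPairDist dinf p) ∧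
      ∀ i : Fin n,
        (∃ j : Fin n, ∃ k : ℕ, k ≤ n ∧
          (p i).1 = lo j + (k : ℝ) * minPairDist dinf p) ∧
        (∃ j' : Fin n, ∃ k' : ℕ, k' ≤ n ∧
          (p i).2 = bo j' + (k' : ℝ) * minPairDist dinf p) := by
  let K : Set (Fin n → ℝ × ℝ) := Set.univ.pi fun i => rect (lo i) (hi i) (bo i) (tp i)
  have hK : IsCompact K := isCompact_univ_pi fun i => isCompact_Icc.prod isCompact_Icc
  have hKn : K.Nonempty := ⟨fun i => (lo i, bo i), by
    intro i _
    exact ⟨⟨le_rfl, hx i⟩, ⟨le_rfl, hy i⟩⟩⟩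
  obtain ⟨p0, hp0, hmax⟩ := hK.exists_isMaxOn hKn (cont_mpd hn).continuousOn
  have hK2 : IsCompact (K ∩ {p | minPairDist dinf p0 ≤ minPairDist dinf p}) :=
    hK.inter_right (isClosed_le continuous_const (cont_mpd hn))
  obtain ⟨p, ⟨hpK, hpd⟩, hmin⟩ := hK2.exists_isMinOn ⟨p0, hp0, le_refl (minPairDist dinf p0)⟩
    (f := fun p : Fin n → ℝ × ℝ => ∑ i, ((p i).1 + (p i).2))
    (by fun_prop)
  have heq : minPairDist dinf p = minPairDist dinf p0 := le_antisymm (hmax hpK) hpd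
  have hp : ∀ i, p i ∈ rect (lo i) (hi i) (bo i) (tp i) := fun i => hpK i trivial
  have hmin' : ∀ q : Fin n → ℝ × ℝ, (∀ i, q i ∈ rect (lo i) (hi i) (bo i) (tp i)) →
      minPairDist dinf p ≤ minPairDist dinf q →
      ∑ i, ((p i).1 + (p i).2) ≤ ∑ i, ((q i).1 + (q i).2) := by
    intro q hq hq2
    exact hmin ⟨fun i _ => hq i, by rw [heq] at hq2; exact hq2⟩
  have hf := (le_mpd hn p _).1 le_rfl
  have hr := repl hn p _ lo hi bo tp hp le_rfl hmin'
  have hX := chain (fun i => (p i).1) (fun i => (p i).2) lo _ (fun i => (hp i).1.1)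
    (fun i j hij => le_max_iff.1 (hf i j hij))
    (fun i x' h1 h2 => by
      obtain ⟨j, hj, hj2⟩ := hr i (x', (p i).2) ⟨⟨h1, h2.le.trans (hp i).1.2⟩, (hp i).2⟩
        (by simpa using h2)
      exact ⟨j, hj, max_lt_iff.1 hj2⟩)
  have hY := chain (fun i => (p i).2) (fun i => (p i).1) bo _ (fun i => (hp i).2.1)
    (fun i j hij => (le_max_iff.1 (hf i j hij)).symm)
    (fun i x' h1 h2 => by
      obtain ⟨j, hj, hj2⟩ := hr i ((p i).1, x') ⟨(hp i).1, ⟨h1, h2.le.trans (hp i).2.2⟩⟩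
        (by simpa using h2)
      exact ⟨j, hj, (max_lt_iff.1 hj2).symm⟩)
  refine ⟨p, hp, ⟨⟨p, hp, rfl⟩, ?_⟩, fun i => ⟨hX i, hY i⟩⟩
  rintro v ⟨q, hq, rfl⟩
  rw [heq]
  exact hmax (show q ∈ K from fun i _ => hq i)
end

section
/- Let γ > 0 and let (i,j) and (i',j') be two distinct plus-anchors. Then for every point p in the plus-shape P_γ(i,j) and every point q in the plus-shape P_γ(i',j'), the L₁ distance satisfies d₁(p,q) ≥ 2γ. -/
open Set

/-- The plus-shape with anchor grid point `(i,j)` in the grid with spacing `γ`. -/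
def plusShape (γ : ℝ) (i j : ℤ) : Set (ℝ × ℝ) :=
  ({(i : ℝ) * γ} ×ˢ Set.Icc (((j : ℝ) - 1) * γ) (((j : ℝ) + 1) * γ)) ∪
  (Set.Icc (((i : ℝ) - 1) * γ) (((i : ℝ) + 1) * γ) ×ˢ {(j : ℝ) * γ})

/-- `(i,j)` is a plus-anchor if `i` is even and `i ≡ j (mod 4)`. -/
def plusAnchor (i j : ℤ) : Prop := Even i ∧ i ≡ j [ZMOD 4]

theorem plus_near (γ : ℝ) (hγ : 0 < γ) (i j : ℤ) (p : ℝ × ℝ) (hp : p ∈ plusShape γ i j) :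
    |p.1 - i * γ| + |p.2 - j * γ| ≤ γ := by
  obtain ⟨x, y⟩ := p
  simp only [plusShape, Set.mem_union, Set.mem_prod, Set.mem_singleton_iff, Set.mem_Icc] at hp
  rcases hp with ⟨h1, h2, h3⟩ | ⟨⟨h2, h3⟩, h1⟩
  · have : |y - j * γ| ≤ γ := abs_le.2 ⟨by linarith, by linarith⟩
    simpa [h1] using this
  · have : |x - i * γ| ≤ γ := abs_le.2 ⟨by linarith, by linarith⟩
    simpa [h1] using this

theorem stmt4 (γ : ℝ) (hγ : 0 < γ) (i j i' j' : ℤ)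
    (h : plusAnchor i j) (h' : plusAnchor i' j') (hne : (i, j) ≠ (i', j'))
    (p q : ℝ × ℝ) (hp : p ∈ plusShape γ i j) (hq : q ∈ plusShape γ i' j') :
    2 * γ ≤ d1 p q := by
  have hp := plus_near γ hγ i j p hp
  have hq := plus_near γ hγ i' j' q hq
  obtain ⟨⟨a, ha⟩, h2⟩ := h
  obtain ⟨⟨b, hb⟩, h4⟩ := h'
  have h2 := h2.dvd
  have h4 := h4.dvd
  have hne' : ¬ (i = i' ∧ j = j') := fun h => hne (by rw [h.1, h.2])
  have key : 4 ≤ |i - i'| + |j - j'| := by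
    have := le_abs_self (i - i')
    have := neg_le_abs (i - i')
    have := le_abs_self (j - j')
    have := neg_le_abs (j - j')
    omega
  have key' : (4 : ℝ) ≤ |(i : ℝ) - i'| + |(j : ℝ) - j'| := by exact_mod_cast key
  have tri : ∀ (x y : ℝ) (m n : ℤ),
      |(m : ℝ) - n| * γ ≤ |x - m * γ| + |x - y| + |y - n * γ| := by
    intro x y m n
    have e : |(m : ℝ) - n| * γ = |m * γ - n * γ| := by
      rw [← sub_mul, abs_mul, abs_of_pos hγ]
    rw [e, abs_sub_comm x (m * γ)]
    linarith [abs_sub_le (m * γ) x (n * γ), abs_sub_le x y (n * γ)]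
  have t1 := tri p.1 q.1 i i'
  have t2 := tri p.2 q.2 j j'
  have := mul_le_mul_of_nonneg_right key' hγ.le
  rw [add_mul] at this
  unfold d1
  linarith
end

section
/- Let γ > 0 and let (i,j) and (i',j') be two distinct plus-anchors. Then for every point p in the plus-shape P_γ(i,j) and every point q in the plus-shape P_γ(i',j'), the Euclidean distance satisfies d₂(p,q) ≥ √2 · γ. -/
open Set

lemma plus_diamond (γ : ℝ) (i j : ℤ) (p : ℝ × ℝ) (hp : p ∈ plusShape γ i j) :
    |p.1 - i * γ| + |p.2 - j * γ| ≤ γ := by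
  obtain ⟨x, y⟩ := p
  simp only [plusShape, mem_union, mem_prod, mem_singleton_iff, mem_Icc] at hp
  rcases hp with ⟨rfl, h1, h2⟩ | ⟨⟨h1, h2⟩, rfl⟩
  · simp only [sub_self, abs_zero, zero_add]
    rw [abs_le]; constructor <;> linarith
  · simp only [sub_self, abs_zero, add_zero]
    rw [abs_le]; constructor <;> linarith

lemma anchor_sep (i j i' j' : ℤ)
    (h : plusAnchor i j) (h' : plusAnchor i' j') (hne : (i, j) ≠ (i', j')) :
    4 ≤ |i - i'| + |j - j'| := by
  obtain ⟨⟨k, hk⟩, h2⟩ := h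
  obtain ⟨⟨k', hk'⟩, h2'⟩ := h'
  simp only [Int.ModEq] at h2 h2'
  have hn : ¬ (i = i' ∧ j = j') := by simpa using hne
  rcases abs_cases (i - i') with ⟨e, _⟩ | ⟨e, _⟩ <;>
  rcases abs_cases (j - j') with ⟨f, _⟩ | ⟨f, _⟩ <;> rw [e, f] <;> omega

theorem stmt5 (γ : ℝ) (hγ : 0 < γ) (i j i' j' : ℤ)
    (h : plusAnchor i j) (h' : plusAnchor i' j') (hne : (i, j) ≠ (i', j'))
    (p q : ℝ × ℝ) (hp : p ∈ plusShape γ i j) (hq : q ∈ plusShape γ i' j') :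
    Real.sqrt 2 * γ ≤ d2 p q := by
  have hP := plus_diamond γ i j p hp
  have hQ := plus_diamond γ i' j' q hq
  have hA : (4 : ℝ) ≤ |(i : ℝ) - i'| + |(j : ℝ) - j'| := by
    exact_mod_cast anchor_sep i j i' j' h h' hne
  have key : ∀ a b x y : ℝ, |a - b| * γ ≤ |x - y| + |x - a * γ| + |y - b * γ| := by
    intro a b x y
    have e : |a - b| * γ = |(x - y) + (-(x - a * γ)) + (y - b * γ)| := by
      rw [← abs_of_pos hγ, ← abs_mul, abs_of_pos hγ]; congr 1; ring
    rw [e]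
    refine (abs_add_three _ _ _).trans ?_
    rw [abs_neg]
  have k1 := key i i' p.1 q.1
  have k2 := key j j' p.2 q.2
  have hs : 2 * γ ≤ |p.1 - q.1| + |p.2 - q.2| := by nlinarith
  unfold d2
  apply Real.le_sqrt_of_sq_le
  rw [mul_pow, Real.sq_sqrt (by norm_num), ← sq_abs (p.1 - q.1), ← sq_abs (p.2 - q.2)]
  nlinarith [sq_nonneg (|p.1 - q.1| - |p.2 - q.2|)]
end

section
/- Let γ > 0 and let (i,j) and (i',j') be two distinct L-anchors. Then for every point p in the L-shape L_γ(i,j) and every point q in the L-shape L_γ(i',j'), the L_∞ distance satisfies d_∞(p,q) ≥ γ. -/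
open Set

/-- The L-shape with anchor grid point `(i,j)` in the grid with spacing `γ`. -/
def lShape (γ : ℝ) (i j : ℤ) : Set (ℝ × ℝ) :=
  ({(i : ℝ) * γ} ×ˢ Set.Icc ((j : ℝ) * γ) (((j : ℝ) + 1) * γ)) ∪
  (Set.Icc ((i : ℝ) * γ) (((i : ℝ) + 1) * γ) ×ˢ {(j : ℝ) * γ})

/-- `(i,j)` is an L-anchor if `i ≡ j (mod 3)`. -/
def lAnchor (i j : ℤ) : Prop := i ≡ j [ZMOD 3]

theorem stmt6 (γ : ℝ) (hγ : 0 < γ) (i j i' j' : ℤ)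
    (h : lAnchor i j) (h' : lAnchor i' j') (hne : (i, j) ≠ (i', j'))
    (p q : ℝ × ℝ) (hp : p ∈ lShape γ i j) (hq : q ∈ lShape γ i' j') :
    γ ≤ dinf p q := by
  obtain ⟨p1, p2⟩ := p
  obtain ⟨q1, q2⟩ := q
  have hc : i + 2 ≤ i' ∨ i' + 2 ≤ i ∨ j + 2 ≤ j' ∨ j' + 2 ≤ j ∨
      (i' = i + 1 ∧ j' = j + 1) ∨ (i = i' + 1 ∧ j = j' + 1) := by
    unfold lAnchor Int.ModEq at h h'
    have : ¬ (i = i' ∧ j = j') := fun e => hne (by rw [e.1, e.2])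
    omega
  simp only [lShape, mem_union, mem_prod, mem_singleton_iff, mem_Icc] at hp hq
  have key : γ ≤ p1 - q1 ∨ γ ≤ q1 - p1 ∨ γ ≤ p2 - q2 ∨ γ ≤ q2 - p2 := by
    have mono : ∀ a b : ℤ, a + 2 ≤ b → ((a : ℝ) + 2) * γ ≤ b * γ := fun a b hab =>
      mul_le_mul_of_nonneg_right (by exact_mod_cast hab) hγ.le
    rcases hc with c | c | c | c | ⟨rfl, rfl⟩ | ⟨rfl, rfl⟩
    · have := mono _ _ c
      right; left
      rcases hp with ⟨_, _, _⟩ | ⟨⟨_, _⟩, _⟩ <;> rcases hq with ⟨_, _, _⟩ | ⟨⟨_, _⟩, _⟩ <;> linarith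
    · have := mono _ _ c
      left
      rcases hp with ⟨_, _, _⟩ | ⟨⟨_, _⟩, _⟩ <;> rcases hq with ⟨_, _, _⟩ | ⟨⟨_, _⟩, _⟩ <;> linarith
    · have := mono _ _ c
      right; right; right
      rcases hp with ⟨_, _, _⟩ | ⟨⟨_, _⟩, _⟩ <;> rcases hq with ⟨_, _, _⟩ | ⟨⟨_, _⟩, _⟩ <;> linarith
    · have := mono _ _ c
      right; right; left
      rcases hp with ⟨_, _, _⟩ | ⟨⟨_, _⟩, _⟩ <;> rcases hq with ⟨_, _, _⟩ | ⟨⟨_, _⟩, _⟩ <;> linarith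
    · push_cast at hq
      rcases hp with ⟨_, _, _⟩ | ⟨⟨_, _⟩, _⟩
      · right; left
        rcases hq with ⟨_, _, _⟩ | ⟨⟨_, _⟩, _⟩ <;> linarith
      · right; right; right
        rcases hq with ⟨_, _, _⟩ | ⟨⟨_, _⟩, _⟩ <;> linarith
    · push_cast at hp
      rcases hq with ⟨_, _, _⟩ | ⟨⟨_, _⟩, _⟩
      · left
        rcases hp with ⟨_, _, _⟩ | ⟨⟨_, _⟩, _⟩ <;> linarith
      · right; right; left
        rcases hp with ⟨_, _, _⟩ | ⟨⟨_, _⟩, _⟩ <;> linarith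
  simp only [dinf, le_max_iff, le_abs, neg_sub]
  tauto
end

section
/- Let γ > 0 and let U be the union of the plus-shapes P_γ(i,j) over all plus-anchors (i,j). Then every nonempty axis-aligned rectangle r ⊆ ℝ² that is disjoint from U is contained in one of the following blocks, for some integers a, b: [aγ, (a+4)γ] × [bγ, (b+1)γ], or [aγ, (a+1)γ] × [bγ, (b+4)γ], or [aγ, (a+2)γ] × [bγ, (b+2)γ]. -/
open Set

theorem half_aux (x1 x2 y1 y2 : ℝ) (hx : x1 ≤ x2) (hy : y1 ≤ y2)
    (hV : ∀ i j : ℤ, Even i → i ≡ j [ZMOD 4] → x1 ≤ i → (i : ℝ) ≤ x2 → y1 ≤ j + 1 →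
      (j : ℝ) - 1 ≤ y2 → False)
    (hH : ∀ i j : ℤ, Even i → i ≡ j [ZMOD 4] → y1 ≤ j → (j : ℝ) ≤ y2 → x1 ≤ i + 1 →
      (i : ℝ) - 1 ≤ x2 → False)
    (i : ℤ) (hi : Even i) (h1 : x1 ≤ i) (h2 : (i : ℝ) ≤ x2) :
    ∃ a b : ℤ, ((a : ℝ) ≤ x1 ∧ x2 ≤ a + 4 ∧ (b : ℝ) ≤ y1 ∧ y2 ≤ b + 1) ∨
      ((a : ℝ) ≤ x1 ∧ x2 ≤ a + 2 ∧ (b : ℝ) ≤ y1 ∧ y2 ≤ b + 2) := by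
  obtain ⟨j, hj, hj1, hj2⟩ : ∃ j : ℤ, i ≡ j [ZMOD 4] ∧ (j : ℝ) - 1 ≤ y1 ∧ y1 < j + 3 := by
    refine ⟨i + 4 * ⌊(y1 - i + 1) / 4⌋, ?_, ?_, ?_⟩
    · unfold Int.ModEq; omega
    · have := Int.floor_le ((y1 - i + 1) / 4)
      push_cast; linarith
    · have := Int.lt_floor_add_one ((y1 - i + 1) / 4)
      push_cast; linarith
  have e1 : (j : ℝ) + 1 < y1 := by
    by_contra h
    exact hV i j hi hj h1 h2 (by linarith) (by linarith)
  have e2 : y2 < (j : ℝ) + 3 := by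
    by_contra h
    refine hV i (j + 4) hi ?_ h1 h2 ?_ ?_
    · unfold Int.ModEq at *; omega
    · push_cast; linarith
    · push_cast; linarith
  have ep : Even (i + 2) := hi.add even_two
  have em : Even (i - 2) := hi.sub even_two
  have mp : i + 2 ≡ j + 2 [ZMOD 4] := by unfold Int.ModEq at *; omega
  have mm : i - 2 ≡ j + 2 [ZMOD 4] := by unfold Int.ModEq at *; omega
  have e3 : x2 < (i : ℝ) + 2 := by
    by_contra h
    refine hV (i + 2) (j + 2) ep mp ?_ ?_ ?_ ?_ <;> push_cast <;> linarith
  have e4 : (i : ℝ) - 2 < x1 := by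
    by_contra h
    refine hV (i - 2) (j + 2) em mm ?_ ?_ ?_ ?_ <;> push_cast <;> linarith
  by_cases c1 : y1 ≤ j + 2
  · by_cases c2 : (j : ℝ) + 2 ≤ y2
    · have e5 : x2 < (i : ℝ) + 1 := by
        by_contra h
        refine hH (i + 2) (j + 2) ep mp ?_ ?_ ?_ ?_ <;> push_cast <;> linarith
      have e6 : (i : ℝ) - 1 < x1 := by
        by_contra h
        refine hH (i - 2) (j + 2) em mm ?_ ?_ ?_ ?_ <;> push_cast <;> linarith
      refine ⟨i - 1, j + 1, Or.inr ⟨?_, ?_, ?_, ?_⟩⟩ <;> push_cast <;> linarith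
    · refine ⟨i - 2, j + 1, Or.inl ⟨?_, ?_, ?_, ?_⟩⟩ <;> push_cast <;> linarith
  · refine ⟨i - 2, j + 2, Or.inl ⟨?_, ?_, ?_, ?_⟩⟩ <;> push_cast <;> linarith

theorem even_aux (x1 x2 : ℝ)
    (h : ∀ i : ℤ, Even i → x1 ≤ i → (i : ℝ) ≤ x2 → False) :
    ∃ a : ℤ, (a : ℝ) ≤ x1 ∧ x2 ≤ a + 2 := by
  have f1 := Int.floor_le (x1 / 2)
  have f2 := Int.lt_floor_add_one (x1 / 2)
  refine ⟨2 * ⌊x1 / 2⌋, ?_, ?_⟩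
  · push_cast; linarith
  · by_contra hc
    push_cast at hc
    refine h (2 * (⌊x1 / 2⌋ + 1)) (even_two_mul _) ?_ ?_ <;> push_cast <;> linarith

theorem core_aux (x1 x2 y1 y2 : ℝ) (hx : x1 ≤ x2) (hy : y1 ≤ y2)
    (hV : ∀ i j : ℤ, Even i → i ≡ j [ZMOD 4] → x1 ≤ i → (i : ℝ) ≤ x2 → y1 ≤ j + 1 →
      (j : ℝ) - 1 ≤ y2 → False)
    (hH : ∀ i j : ℤ, Even i → i ≡ j [ZMOD 4] → y1 ≤ j → (j : ℝ) ≤ y2 → x1 ≤ i + 1 →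
      (i : ℝ) - 1 ≤ x2 → False) :
    ∃ a b : ℤ, ((a : ℝ) ≤ x1 ∧ x2 ≤ a + 4 ∧ (b : ℝ) ≤ y1 ∧ y2 ≤ b + 1) ∨
      ((a : ℝ) ≤ x1 ∧ x2 ≤ a + 1 ∧ (b : ℝ) ≤ y1 ∧ y2 ≤ b + 4) ∨
      ((a : ℝ) ≤ x1 ∧ x2 ≤ a + 2 ∧ (b : ℝ) ≤ y1 ∧ y2 ≤ b + 2) := by
  have ev : ∀ i j : ℤ, Even i → i ≡ j [ZMOD 4] → Even j := by
    intro i j h1 h2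
    rw [Int.even_iff] at *
    unfold Int.ModEq at h2
    omega
  by_cases hA : ∃ i : ℤ, Even i ∧ x1 ≤ i ∧ (i : ℝ) ≤ x2
  · obtain ⟨i, h0, h1, h2⟩ := hA
    obtain ⟨a, b, h⟩ := half_aux x1 x2 y1 y2 hx hy hV hH i h0 h1 h2
    exact ⟨a, b, by tauto⟩
  by_cases hB : ∃ i : ℤ, Even i ∧ y1 ≤ i ∧ (i : ℝ) ≤ y2
  · obtain ⟨i, h0, h1, h2⟩ := hB
    obtain ⟨a, b, h⟩ := half_aux y1 y2 x1 x2 hy hx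
      (fun i j e m => hH j i (ev i j e m) m.symm)
      (fun i j e m => hV j i (ev i j e m) m.symm) i h0 h1 h2
    exact ⟨b, a, by tauto⟩
  obtain ⟨a, ha⟩ := even_aux x1 x2 (fun i h0 h1 h2 => hA ⟨i, h0, h1, h2⟩)
  obtain ⟨b, hb⟩ := even_aux y1 y2 (fun i h0 h1 h2 => hB ⟨i, h0, h1, h2⟩)
  exact ⟨a, b, by tauto⟩

theorem stmt7 (γ : ℝ) (hγ : 0 < γ) (x1 x2 y1 y2 : ℝ) (hx : x1 ≤ x2) (hy : y1 ≤ y2)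
    (hdisj : Disjoint (rect x1 x2 y1 y2)
      (⋃ (ij : ℤ × ℤ) (_ : plusAnchor ij.1 ij.2), plusShape γ ij.1 ij.2)) :
    ∃ a b : ℤ,
      rect x1 x2 y1 y2 ⊆
        rect ((a : ℝ) * γ) (((a : ℝ) + 4) * γ) ((b : ℝ) * γ) (((b : ℝ) + 1) * γ) ∨
      rect x1 x2 y1 y2 ⊆
        rect ((a : ℝ) * γ) (((a : ℝ) + 1) * γ) ((b : ℝ) * γ) (((b : ℝ) + 4) * γ) ∨
      rect x1 x2 y1 y2 ⊆
        rect ((a : ℝ) * γ) (((a : ℝ) + 2) * γ) ((b : ℝ) * γ) (((b : ℝ) + 2) * γ) := by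
  have key : ∀ i j : ℤ, Even i → i ≡ j [ZMOD 4] → ∀ p ∈ rect x1 x2 y1 y2,
      p ∈ plusShape γ i j → False := by
    intro i j e m p hp hq
    refine Set.disjoint_left.1 hdisj hp ?_
    simp only [Set.mem_iUnion]
    exact ⟨(i, j), ⟨e, m⟩, hq⟩
  have sub : ∀ a b c d : ℝ, a * γ ≤ x1 ∧ x2 ≤ b * γ ∧ c * γ ≤ y1 ∧ y2 ≤ d * γ →
      rect x1 x2 y1 y2 ⊆ rect (a * γ) (b * γ) (c * γ) (d * γ) := by
    rintro a b c d ⟨h1, h2, h3, h4⟩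
    exact Set.prod_mono (Set.Icc_subset_Icc h1 h2) (Set.Icc_subset_Icc h3 h4)
  obtain ⟨a, b, h⟩ := core_aux (x1 / γ) (x2 / γ) (y1 / γ) (y2 / γ)
    (by gcongr) (by gcongr)
    (by
      intro i j e m h1 h2 h3 h4
      rw [div_le_iff₀ hγ] at h1 h3
      rw [le_div_iff₀ hγ] at h2 h4
      refine key i j e m ((i : ℝ) * γ, max y1 (((j : ℝ) - 1) * γ)) ?_ (Or.inl ?_)
      · exact ⟨⟨h1, h2⟩, le_max_left _ _, max_le hy h4⟩
      · exact ⟨rfl, le_max_right _ _, max_le h3 (by nlinarith)⟩)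
    (by
      intro i j e m h1 h2 h3 h4
      rw [div_le_iff₀ hγ] at h1 h3
      rw [le_div_iff₀ hγ] at h2 h4
      refine key i j e m (max x1 (((i : ℝ) - 1) * γ), (j : ℝ) * γ) ?_ (Or.inr ?_)
      · exact ⟨⟨le_max_left _ _, max_le hx h4⟩, h1, h2⟩
      · exact ⟨⟨le_max_right _ _, max_le h3 (by nlinarith)⟩, rfl⟩)
  simp only [div_le_iff₀ hγ, le_div_iff₀ hγ] at h
  refine ⟨a, b, ?_⟩
  rcases h with h | h | h
  · exact Or.inl (sub _ _ _ _ h)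
  · exact Or.inr (Or.inl (sub _ _ _ _ h))
  · exact Or.inr (Or.inr (sub _ _ _ _ h))
end

section
/- Let γ > 0 and let U be the union of the L-shapes L_γ(i,j) over all L-anchors (i,j). Then every nonempty axis-aligned rectangle r ⊆ ℝ² that is disjoint from U is contained in one of the following blocks, for some integers a, b: [aγ, (a+3)γ] × [bγ, (b+1)γ], or [aγ, (a+1)γ] × [bγ, (b+3)γ]. -/
open Set

theorem stmt8 (γ : ℝ) (hγ : 0 < γ) (x1 x2 y1 y2 : ℝ) (hx : x1 ≤ x2) (hy : y1 ≤ y2)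
    (hdisj : Disjoint (rect x1 x2 y1 y2)
      (⋃ (ij : ℤ × ℤ) (_ : lAnchor ij.1 ij.2), lShape γ ij.1 ij.2)) :
    ∃ a b : ℤ,
      rect x1 x2 y1 y2 ⊆
        rect ((a : ℝ) * γ) (((a : ℝ) + 3) * γ) ((b : ℝ) * γ) (((b : ℝ) + 1) * γ) ∨
      rect x1 x2 y1 y2 ⊆
        rect ((a : ℝ) * γ) (((a : ℝ) + 1) * γ) ((b : ℝ) * γ) (((b : ℝ) + 3) * γ) := by
  have P : ∀ (i j : ℤ) (y : ℝ), i ≡ j [ZMOD 3] → x1 ≤ i * γ → i * γ ≤ x2 → y1 ≤ y → y ≤ y2 →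
      j * γ ≤ y → y ≤ ((j : ℝ) + 1) * γ → False := by
    intro i j y h a1 a2 a3 a4 a5 a6
    refine Set.disjoint_left.1 hdisj (show ((i : ℝ) * γ, y) ∈ rect x1 x2 y1 y2 from ⟨⟨a1, a2⟩, ⟨a3, a4⟩⟩) ?_
    refine Set.mem_iUnion₂.2 ⟨(i, j), h, Or.inl ⟨rfl, a5, a6⟩⟩
  have Q : ∀ (i j : ℤ) (x : ℝ), i ≡ j [ZMOD 3] → y1 ≤ j * γ → j * γ ≤ y2 → x1 ≤ x → x ≤ x2 →
      i * γ ≤ x → x ≤ ((i : ℝ) + 1) * γ → False := by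
    intro i j x h a1 a2 a3 a4 a5 a6
    refine Set.disjoint_left.1 hdisj (show (x, (j : ℝ) * γ) ∈ rect x1 x2 y1 y2 from ⟨⟨a3, a4⟩, ⟨a1, a2⟩⟩) ?_
    refine Set.mem_iUnion₂.2 ⟨(i, j), h, Or.inr ⟨⟨a5, a6⟩, rfl⟩⟩
  have F : ∀ x : ℝ, ∃ m : ℤ, m * γ ≤ x ∧ x < ((m : ℝ) + 1) * γ := fun x =>
    ⟨⌊x / γ⌋, (le_div_iff₀ hγ).1 (Int.floor_le _), (div_lt_iff₀ hγ).1 (Int.lt_floor_add_one _)⟩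
  have R : ∀ m n : ℤ, ∃ a : ℤ, a ≤ m ∧ m + 1 ≤ a + 3 ∧ a ≡ n [ZMOD 3] ∧ a + 3 ≡ n [ZMOD 3] := by
    intro m n
    refine ⟨m - (m - n) % 3, ?_, ?_, ?_, ?_⟩ <;> (try unfold Int.ModEq) <;> omega
  have M : ∀ a b : ℤ, a ≤ b → (a : ℝ) * γ ≤ b * γ := fun a b h =>
    mul_le_mul_of_nonneg_right (by exact_mod_cast h) hγ.le
  obtain ⟨m, hm1, hm2⟩ := F x1
  obtain ⟨n, hn1, hn2⟩ := F y1
  by_cases hY : y2 < ((n : ℝ) + 1) * γ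
  · obtain ⟨a, h1, h2, -, h4⟩ := R m n
    have e1 := M _ _ h1
    have e2 := M _ _ h2
    have e3 : x2 ≤ ((a : ℝ) + 3) * γ := by
      by_contra! hc
      push_cast at e2
      exact P (a + 3) n y1 h4 (by push_cast; linarith) (by push_cast; linarith) le_rfl hy hn1 hn2.le
    exact ⟨a, n, Or.inl (Set.prod_mono (Set.Icc_subset_Icc (e1.trans hm1) e3)
      (Set.Icc_subset_Icc hn1 hY.le))⟩
  by_cases hX : x2 < ((m : ℝ) + 1) * γ
  · obtain ⟨b, h1, h2, -, h4⟩ := R n m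
    have e1 := M _ _ h1
    have e2 := M _ _ h2
    have e3 : y2 ≤ ((b : ℝ) + 3) * γ := by
      by_contra! hc
      push_cast at e2
      exact Q m (b + 3) x1 h4.symm (by push_cast; linarith) (by push_cast; linarith) le_rfl hx
        hm1 hm2.le
    exact ⟨m, b, Or.inr (Set.prod_mono (Set.Icc_subset_Icc hm1 hX.le)
      (Set.Icc_subset_Icc (e1.trans hn1) e3))⟩
  exfalso
  push Not at hX hY
  have h3 : m + 1 ≡ n + 1 [ZMOD 3] ∨ m + 1 ≡ n [ZMOD 3] ∨ m ≡ n + 1 [ZMOD 3] := by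
    unfold Int.ModEq; omega
  rcases h3 with h | h | h
  · exact P (m + 1) (n + 1) (((n : ℝ) + 1) * γ) h (by push_cast; linarith) (by push_cast; linarith)
      hn2.le hY (by push_cast; linarith) (by push_cast; linarith)
  · exact P (m + 1) n (((n : ℝ) + 1) * γ) h (by push_cast; linarith) (by push_cast; linarith)
      hn2.le hY (by linarith) le_rfl
  · exact Q m (n + 1) (((m : ℝ) + 1) * γ) h (by push_cast; linarith) (by push_cast; linarith)
      hm2.le hX (by linarith) le_rfl
end

section
/- Let δ > 0, set γ = δ/2, and let U be the union of the plus-shapes P_γ(i,j) over all plus-anchors (i,j). Let r and r' be nonempty axis-aligned rectangles in ℝ² each disjoint from U, with centres c and c' (the centre of [a,b] × [c,d] is ((a+b)/2, (c+d)/2)). If the centres satisfy d₁(c, c') < δ, then for every q ∈ r and q' ∈ r' we have d₁(q, q') < 3.5·δ. -/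
open Set

def Free9 (a b c d : ℝ) : Prop := ∀ i j : ℤ, i % 2 = 0 → (j - i) % 4 = 0 →
  ¬(a ≤ i ∧ (i:ℝ) ≤ b ∧ c ≤ j + 1 ∧ (j:ℝ) - 1 ≤ d) ∧
  ¬(a ≤ i + 1 ∧ (i:ℝ) - 1 ≤ b ∧ c ≤ j ∧ (j:ℝ) ≤ d)

lemma Free9.swap {a b c d : ℝ} (H : Free9 a b c d) : Free9 c d a b := by
  intro i j hi hj
  obtain ⟨h1, h2⟩ := H j i (by omega) (by omega)
  exact ⟨fun ⟨p, q, r, s⟩ => h2 ⟨r, s, p, q⟩, fun ⟨p, q, r, s⟩ => h1 ⟨r, s, p, q⟩⟩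

lemma Free9.wide {a b c d : ℝ} (hcd : c ≤ d) (H : Free9 a b c d) (hw : 2 ≤ b - a) :
    (b - a) + (d - c) < 5 := by
  by_contra hcon
  push Not at hcon
  obtain ⟨m, hm⟩ : ∃ m : ℤ, m = ⌈a / 2⌉ := ⟨_, rfl⟩
  have m1 : a / 2 ≤ m := hm ▸ Int.le_ceil _
  have m2 : (m : ℝ) < a / 2 + 1 := hm ▸ Int.ceil_lt_add_one _
  obtain ⟨k, hk⟩ : ∃ k : ℤ, k = ⌊(c - 2 * m + 1) / 4⌋ := ⟨_, rfl⟩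
  have k1 : (k : ℝ) ≤ (c - 2 * m + 1) / 4 := hk ▸ Int.floor_le _
  have k2 : (c - 2 * m + 1) / 4 < k + 1 := hk ▸ Int.lt_floor_add_one _
  have A := (H (2 * m) (2 * m + 4 * k) (by omega) (by omega)).1
  have B := (H (2 * m) (2 * m + 4 * k + 4) (by omega) (by omega)).1
  obtain ⟨C, D⟩ := H (2 * m + 2) (2 * m + 4 * k + 2) (by omega) (by omega)
  push_cast at A B C D
  have A' : 2 * (m:ℝ) + 4 * k + 1 < c := by
    by_contra h
    exact A ⟨by linarith, by linarith, by linarith, by linarith⟩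
  have B' : d < 2 * (m:ℝ) + 4 * k + 3 := by
    by_contra h
    exact B ⟨by linarith, by linarith, by linarith, by linarith⟩
  have hh : d - c < 1 := by
    by_contra h
    exact D ⟨by linarith, by linarith, by linarith, by linarith⟩
  exact C ⟨by linarith, by linarith, by linarith, by linarith⟩

lemma Free9.bound {a b c d : ℝ} (hab : a ≤ b) (hcd : c ≤ d) (H : Free9 a b c d) :
    (b - a) + (d - c) < 5 := by
  by_cases h : 2 ≤ b - a
  · exact H.wide hcd h
  by_cases h' : 2 ≤ d - c
  · linarith [H.swap.wide hab h']
  linarith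

lemma bound9 (δ : ℝ) (hδ : 0 < δ) (x1 x2 y1 y2 : ℝ) (hx : x1 ≤ x2) (hy : y1 ≤ y2)
    (hdisj : Disjoint (rect x1 x2 y1 y2)
      (⋃ (ij : ℤ × ℤ) (_ : plusAnchor ij.1 ij.2), plusShape (δ / 2) ij.1 ij.2)) :
    (x2 - x1) + (y2 - y1) < 5 * (δ / 2) := by
  obtain ⟨g, hg⟩ : ∃ g, g = δ / 2 := ⟨_, rfl⟩
  rw [← hg] at hdisj ⊢
  have g0 : 0 < g := by linarith
  have key : ∀ i j : ℤ, i % 2 = 0 → (j - i) % 4 = 0 → ∀ x y, x1 ≤ x → x ≤ x2 → y1 ≤ y →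
      y ≤ y2 → (x, y) ∉ plusShape g i j := by
    intro i j hi hj x y h1 h2 h3 h4 h
    refine Set.disjoint_left.1 hdisj (show (x, y) ∈ rect x1 x2 y1 y2 from ⟨⟨h1, h2⟩, ⟨h3, h4⟩⟩) ?_
    refine Set.mem_iUnion₂.2 ⟨(i, j), ⟨Int.even_iff.2 hi, ?_⟩, h⟩
    exact Int.modEq_iff_dvd.2 (Int.dvd_of_emod_eq_zero hj)
  have F : Free9 (x1 / g) (x2 / g) (y1 / g) (y2 / g) := by
    intro i j hi hj
    simp only [div_le_iff₀ g0, le_div_iff₀ g0]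
    constructor
    · rintro ⟨p, q, r, s⟩
      refine key i j hi hj (i * g) (max y1 ((j - 1) * g)) p q (le_max_left _ _)
        (max_le hy s) (Or.inl ⟨rfl, le_max_right _ _, max_le r ?_⟩)
      nlinarith
    · rintro ⟨p, q, r, s⟩
      refine key i j hi hj (max x1 ((i - 1) * g)) (j * g) (le_max_left _ _)
        (max_le hx q) r s (Or.inr ⟨⟨le_max_right _ _, max_le p ?_⟩, rfl⟩)
      nlinarith
  have := F.bound (by gcongr) (by gcongr)
  rw [← sub_div, ← sub_div, ← add_div, div_lt_iff₀ g0] at this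
  exact this

theorem stmt9 (δ : ℝ) (hδ : 0 < δ)
    (x1 x2 y1 y2 x1' x2' y1' y2' : ℝ)
    (hx : x1 ≤ x2) (hy : y1 ≤ y2) (hx' : x1' ≤ x2') (hy' : y1' ≤ y2')
    (hdisj : Disjoint (rect x1 x2 y1 y2)
      (⋃ (ij : ℤ × ℤ) (_ : plusAnchor ij.1 ij.2), plusShape (δ / 2) ij.1 ij.2))
    (hdisj' : Disjoint (rect x1' x2' y1' y2')
      (⋃ (ij : ℤ × ℤ) (_ : plusAnchor ij.1 ij.2), plusShape (δ / 2) ij.1 ij.2))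
    (hcent : d1 ((x1 + x2) / 2, (y1 + y2) / 2) ((x1' + x2') / 2, (y1' + y2') / 2) < δ) :
    ∀ q ∈ rect x1 x2 y1 y2, ∀ q' ∈ rect x1' x2' y1' y2',
      d1 q q' < 3.5 * δ := by
  have b1 := bound9 δ hδ x1 x2 y1 y2 hx hy hdisj
  have b2 := bound9 δ hδ x1' x2' y1' y2' hx' hy' hdisj'
  rintro ⟨p, q⟩ ⟨⟨h1, h2⟩, ⟨h3, h4⟩⟩ ⟨p', q'⟩ ⟨⟨h5, h6⟩, ⟨h7, h8⟩⟩
  simp only [d1] at *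
  have e1 : |p - p'| ≤ (x2 - x1) / 2 + (x2' - x1') / 2 + |(x1 + x2) / 2 - (x1' + x2') / 2| := by
    rw [abs_le]
    constructor <;> linarith [le_abs_self ((x1 + x2) / 2 - (x1' + x2') / 2),
      neg_abs_le ((x1 + x2) / 2 - (x1' + x2') / 2)]
  have e2 : |q - q'| ≤ (y2 - y1) / 2 + (y2' - y1') / 2 + |(y1 + y2) / 2 - (y1' + y2') / 2| := by
    rw [abs_le]
    constructor <;> linarith [le_abs_self ((y1 + y2) / 2 - (y1' + y2') / 2),
      neg_abs_le ((y1 + y2) / 2 - (y1' + y2') / 2)]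
  linarith
end

section
/- Let δ > 0 and let U be the union of the L-shapes L_δ(i,j) over all L-anchors (i,j). Let r and r' be nonempty axis-aligned rectangles in ℝ² each disjoint from U, with centres c and c' (the centre of [a,b] × [c,d] is ((a+b)/2, (c+d)/2)). If the centres satisfy d_∞(c, c') < δ, then for every q ∈ r and q' ∈ r' we have d_∞(q, q') < 6·δ. -/
open Set

theorem aux_anchor (δ : ℝ) (hδ : 0 < δ) (u v w : ℝ) (h : 3 * δ ≤ v - u) :
    ∃ i j : ℤ, i ≡ j [ZMOD 3] ∧ u ≤ i * δ ∧ i * δ ≤ v ∧ j * δ ≤ w ∧ w ≤ (j + 1) * δ := by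
  have e1 : u / δ * δ = u := div_mul_cancel₀ u hδ.ne'
  have e2 : w / δ * δ = w := div_mul_cancel₀ w hδ.ne'
  have a1 := Int.floor_le (w / δ)
  have a2 := (Int.lt_floor_add_one (w / δ)).le
  set j := ⌊w / δ⌋
  have b1 := Int.le_ceil ((u / δ - j) / 3)
  have b2 := (Int.ceil_lt_add_one ((u / δ - j) / 3)).le
  set k := ⌈(u / δ - j) / 3⌉
  refine ⟨j + 3 * k, j, ?_, ?_, ?_, ?_, ?_⟩
  · simp [Int.ModEq]
  · have : u / δ ≤ ((j + 3 * k : ℤ) : ℝ) := by push_cast; linarith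
    have := mul_le_mul_of_nonneg_right this hδ.le
    linarith
  · have : ((j + 3 * k : ℤ) : ℝ) ≤ u / δ + 3 := by push_cast; linarith
    have := mul_le_mul_of_nonneg_right this hδ.le
    linarith
  · have := mul_le_mul_of_nonneg_right a1 hδ.le
    linarith
  · have := mul_le_mul_of_nonneg_right a2 hδ.le
    linarith

theorem aux_size (δ : ℝ) (hδ : 0 < δ) (x1 x2 y1 y2 : ℝ) (hx : x1 ≤ x2) (hy : y1 ≤ y2)
    (hdisj : Disjoint (rect x1 x2 y1 y2)
      (⋃ (ij : ℤ × ℤ) (_ : lAnchor ij.1 ij.2), lShape δ ij.1 ij.2)) :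
    x2 - x1 < 3 * δ ∧ y2 - y1 < 3 * δ := by
  rw [Set.disjoint_left] at hdisj
  constructor
  · by_contra! h
    obtain ⟨i, j, hij, h1, h2, h3, h4⟩ := aux_anchor δ hδ x1 x2 y1 h
    refine hdisj (a := (i * δ, y1)) ⟨⟨h1, h2⟩, ⟨le_refl _, hy⟩⟩ ?_
    exact Set.mem_iUnion₂.2 ⟨(i, j), hij, Or.inl ⟨rfl, h3, h4⟩⟩
  · by_contra! h
    obtain ⟨j, i, hij, h1, h2, h3, h4⟩ := aux_anchor δ hδ y1 y2 x1 h
    refine hdisj (a := (x1, j * δ)) ⟨⟨le_refl _, hx⟩, ⟨h1, h2⟩⟩ ?_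
    exact Set.mem_iUnion₂.2 ⟨(i, j), hij.symm, Or.inr ⟨⟨h3, h4⟩, rfl⟩⟩

theorem stmt10 (δ : ℝ) (hδ : 0 < δ)
    (x1 x2 y1 y2 x1' x2' y1' y2' : ℝ)
    (hx : x1 ≤ x2) (hy : y1 ≤ y2) (hx' : x1' ≤ x2') (hy' : y1' ≤ y2')
    (hdisj : Disjoint (rect x1 x2 y1 y2)
      (⋃ (ij : ℤ × ℤ) (_ : lAnchor ij.1 ij.2), lShape δ ij.1 ij.2))
    (hdisj' : Disjoint (rect x1' x2' y1' y2')
      (⋃ (ij : ℤ × ℤ) (_ : lAnchor ij.1 ij.2), lShape δ ij.1 ij.2))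
    (hcent : dinf ((x1 + x2) / 2, (y1 + y2) / 2) ((x1' + x2') / 2, (y1' + y2') / 2) < δ) :
    ∀ q ∈ rect x1 x2 y1 y2, ∀ q' ∈ rect x1' x2' y1' y2',
      dinf q q' < 6 * δ := by
  obtain ⟨w, k⟩ := aux_size δ hδ x1 x2 y1 y2 hx hy hdisj
  obtain ⟨w', k'⟩ := aux_size δ hδ x1' x2' y1' y2' hx' hy' hdisj'
  rintro ⟨a, b⟩ ⟨⟨h1, h2⟩, h3, h4⟩ ⟨a', b'⟩ ⟨⟨h5, h6⟩, h7, h8⟩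
  simp only [dinf, max_lt_iff, abs_lt] at *
  obtain ⟨⟨c1, c2⟩, c3, c4⟩ := hcent
  refine ⟨⟨?_, ?_⟩, ?_, ?_⟩ <;> linarith
end

section
/- For any three points p₁, p₂, p₃ in the unit square [0,1]², some pair among them has Euclidean distance at most √6 − √2. Moreover, the three points (0,0), (1, 2−√3), (2−√3, 1) lie in [0,1]² and each pair among them has Euclidean distance exactly √6 − √2. Consequently, the maximum over triples of points of [0,1]² of the minimum pairwise Euclidean distance equals √6 − √2, which is an irrational number. -/
open Set

/-- The closed unit square `[0,1]²` in `ℝ²`. -/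
def unitSquare : Set (ℝ × ℝ) := Set.Icc (0 : ℝ) 1 ×ˢ Set.Icc (0 : ℝ) 1

def Betw (a b c : ℝ) : Prop := (a ≤ b ∧ b ≤ c) ∨ (c ≤ b ∧ b ≤ a)

lemma Betw.symm' {a b c : ℝ} (h : Betw a b c) : Betw c b a := Or.symm h

lemma btw_total (a b c : ℝ) : Betw b a c ∨ Betw a b c ∨ Betw a c b := by
  unfold Betw
  rcases le_total a b with h1 | h1 <;> rcases le_total b c with h2 | h2 <;>
    rcases le_total a c with h3 | h3 <;> simp [*]

lemma sq_le_one' {a b : ℝ} (ha : a ∈ Icc (0:ℝ) 1) (hb : b ∈ Icc (0:ℝ) 1) : (a - b) ^ 2 ≤ 1 := by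
  obtain ⟨h1, h2⟩ := ha
  obtain ⟨h3, h4⟩ := hb
  nlinarith

lemma btw_dist {a b c t : ℝ} (h : Betw a b c) (ha : a ∈ Icc (0:ℝ) 1) (hc : c ∈ Icc (0:ℝ) 1)
    (ht0 : 0 ≤ t) (hd : t ^ 2 < (a - b) ^ 2) : (b - c) ^ 2 ≤ (1 - t) ^ 2 := by
  obtain ⟨h1, h2⟩ := ha
  obtain ⟨h3, h4⟩ := hc
  have h5 : t < |a - b| := by
    have := sq_lt_sq.1 hd
    rwa [abs_of_nonneg ht0] at this
  rcases h with ⟨h6, h7⟩ | ⟨h6, h7⟩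
  · rw [abs_of_nonpos (by linarith)] at h5
    apply sq_le_sq'  <;> linarith
  · rw [abs_of_nonneg (by linarith)] at h5
    apply sq_le_sq'  <;> linarith

lemma btw_sum {a b c : ℝ} (h : Betw a b c) (ha : a ∈ Icc (0:ℝ) 1) (hc : c ∈ Icc (0:ℝ) 1) :
    (a - b) ^ 2 + (b - c) ^ 2 ≤ 1 := by
  have h1 := sq_le_one' ha hc
  have : 0 ≤ (a - b) * (b - c) := by
    rcases h with ⟨h6, h7⟩ | ⟨h6, h7⟩ <;> nlinarith
  nlinarith

lemma mono_case {t : ℝ} {a b c : ℝ × ℝ} (ha : a ∈ unitSquare) (hc : c ∈ unitSquare)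
    (h1 : Betw a.1 b.1 c.1) (h2 : Betw a.2 b.2 c.2)
    (hab : 1 + t ^ 2 < (a.1 - b.1) ^ 2 + (a.2 - b.2) ^ 2)
    (hbc : 1 + t ^ 2 < (b.1 - c.1) ^ 2 + (b.2 - c.2) ^ 2) : False := by
  have e1 := btw_sum h1 ha.1 hc.1
  have e2 := btw_sum h2 ha.2 hc.2
  nlinarith [sq_nonneg t]

/-- `c` is the corner, `v` is in the middle for `x`, `u` is in the middle for `y`. -/
lemma corner_case {t : ℝ} (ht0 : 0 ≤ t) (ht : 2 * (1 - t) ^ 2 = 1 + t ^ 2) {c u v : ℝ × ℝ}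
    (hc : c ∈ unitSquare) (hu : u ∈ unitSquare) (hv : v ∈ unitSquare)
    (h1 : Betw c.1 v.1 u.1) (h2 : Betw c.2 u.2 v.2)
    (hcu : 1 + t ^ 2 < (c.1 - u.1) ^ 2 + (c.2 - u.2) ^ 2)
    (hcv : 1 + t ^ 2 < (c.1 - v.1) ^ 2 + (c.2 - v.2) ^ 2)
    (huv : 1 + t ^ 2 < (u.1 - v.1) ^ 2 + (u.2 - v.2) ^ 2) : False := by
  have e1 := btw_dist h1 hc.1 hu.1 ht0 (by linarith [sq_le_one' hc.2 hv.2])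
  have e2 := btw_dist h2 hc.2 hv.2 ht0 (by linarith [sq_le_one' hc.1 hu.1])
  nlinarith

lemma dsymm {s : ℝ} {a b : ℝ × ℝ} (h : s < (a.1 - b.1) ^ 2 + (a.2 - b.2) ^ 2) :
    s < (b.1 - a.1) ^ 2 + (b.2 - a.2) ^ 2 := by
  nlinarith

lemma main_bound {t : ℝ} (ht0 : 0 ≤ t) (ht : 2 * (1 - t) ^ 2 = 1 + t ^ 2) {p q r : ℝ × ℝ}
    (hp : p ∈ unitSquare) (hq : q ∈ unitSquare) (hr : r ∈ unitSquare)
    (hpq : 1 + t ^ 2 < (p.1 - q.1) ^ 2 + (p.2 - q.2) ^ 2)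
    (hpr : 1 + t ^ 2 < (p.1 - r.1) ^ 2 + (p.2 - r.2) ^ 2)
    (hqr : 1 + t ^ 2 < (q.1 - r.1) ^ 2 + (q.2 - r.2) ^ 2) : False := by
  have hqp := dsymm hpq
  have hrp := dsymm hpr
  have hrq := dsymm hqr
  rcases btw_total p.1 q.1 r.1 with hx | hx | hx <;>
    rcases btw_total p.2 q.2 r.2 with hy | hy | hy
  · exact mono_case hq hr hx hy hqp hpr
  · exact corner_case ht0 ht hr hq hp hx.symm' hy.symm' hrq hrp hqp
  · exact corner_case ht0 ht hq hr hp hx hy.symm' hqr hqp hrp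
  · exact corner_case ht0 ht hr hp hq hx.symm' hy.symm' hrp hrq hpq
  · exact mono_case hp hr hx hy hpq hqr
  · exact corner_case ht0 ht hp hr hq hx hy hpr hpq hrq
  · exact corner_case ht0 ht hq hp hr hx.symm' hy hqp hqr hpr
  · exact corner_case ht0 ht hp hq hr hx hy hpq hpr hqr
  · exact mono_case hp hq hx hy hpr hrq

lemma s62_nonneg : 0 ≤ Real.sqrt 6 - Real.sqrt 2 :=
  sub_nonneg.2 (Real.sqrt_le_sqrt (by norm_num))

lemma s62_sq : (Real.sqrt 6 - Real.sqrt 2) ^ 2 = 8 - 4 * Real.sqrt 3 := by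
  have h6 : Real.sqrt 6 = Real.sqrt 2 * Real.sqrt 3 := by
    rw [← Real.sqrt_mul (by norm_num)]; norm_num
  have h2 : Real.sqrt 2 ^ 2 = 2 := Real.sq_sqrt (by norm_num)
  have h3 : Real.sqrt 3 ^ 2 = 3 := Real.sq_sqrt (by norm_num)
  rw [h6]
  calc _ = Real.sqrt 2 ^ 2 * (Real.sqrt 3 ^ 2 - 2 * Real.sqrt 3 + 1) := by ring
    _ = _ := by rw [h2, h3]; ring

lemma d2_eq {p q : ℝ × ℝ} (h : (p.1 - q.1) ^ 2 + (p.2 - q.2) ^ 2 = 8 - 4 * Real.sqrt 3) :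
    d2 p q = Real.sqrt 6 - Real.sqrt 2 := by
  unfold d2
  rw [h, ← s62_sq, Real.sqrt_sq s62_nonneg]

lemma lt_of_d2 {p q : ℝ × ℝ} (h : Real.sqrt 6 - Real.sqrt 2 < d2 p q) :
    1 + (2 - Real.sqrt 3) ^ 2 < (p.1 - q.1) ^ 2 + (p.2 - q.2) ^ 2 := by
  unfold d2 at h
  rw [Real.lt_sqrt s62_nonneg, s62_sq] at h
  have h3 : Real.sqrt 3 ^ 2 = 3 := Real.sq_sqrt (by norm_num)
  linarith

theorem stmt12 :
    (∀ p₁ p₂ p₃ : ℝ × ℝ, p₁ ∈ unitSquare → p₂ ∈ unitSquare → p₃ ∈ unitSquare →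
      d2 p₁ p₂ ≤ Real.sqrt 6 - Real.sqrt 2 ∨
      d2 p₁ p₃ ≤ Real.sqrt 6 - Real.sqrt 2 ∨
      d2 p₂ p₃ ≤ Real.sqrt 6 - Real.sqrt 2) ∧
    (((0 : ℝ), (0 : ℝ)) ∈ unitSquare ∧
      ((1 : ℝ), 2 - Real.sqrt 3) ∈ unitSquare ∧
      ((2 - Real.sqrt 3, (1 : ℝ))) ∈ unitSquare ∧
      d2 (0, 0) (1, 2 - Real.sqrt 3) = Real.sqrt 6 - Real.sqrt 2 ∧
      d2 (0, 0) (2 - Real.sqrt 3, 1) = Real.sqrt 6 - Real.sqrt 2 ∧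
      d2 (1, 2 - Real.sqrt 3) (2 - Real.sqrt 3, 1) = Real.sqrt 6 - Real.sqrt 2) ∧
    IsGreatest {v : ℝ | ∃ p₁ p₂ p₃ : ℝ × ℝ, p₁ ∈ unitSquare ∧ p₂ ∈ unitSquare ∧
        p₃ ∈ unitSquare ∧ v = min (min (d2 p₁ p₂) (d2 p₁ p₃)) (d2 p₂ p₃)}
      (Real.sqrt 6 - Real.sqrt 2) ∧
    Irrational (Real.sqrt 6 - Real.sqrt 2) := by
  have h3 : Real.sqrt 3 ^ 2 = 3 := Real.sq_sqrt (by norm_num)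
  have h3a : Real.sqrt 3 ≤ 2 := by
    rw [Real.sqrt_le_left (by norm_num)]; norm_num
  have h3b : 1 ≤ Real.sqrt 3 := by
    rw [Real.one_le_sqrt]; norm_num
  have A : ∀ p₁ p₂ p₃ : ℝ × ℝ, p₁ ∈ unitSquare → p₂ ∈ unitSquare → p₃ ∈ unitSquare →
      d2 p₁ p₂ ≤ Real.sqrt 6 - Real.sqrt 2 ∨
      d2 p₁ p₃ ≤ Real.sqrt 6 - Real.sqrt 2 ∨
      d2 p₂ p₃ ≤ Real.sqrt 6 - Real.sqrt 2 := by
    intro p q r hp hq hr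
    by_contra! h
    obtain ⟨a, b, c⟩ := h
    exact main_bound (t := 2 - Real.sqrt 3) (by linarith) (by nlinarith) hp hq hr
      (lt_of_d2 a) (lt_of_d2 b) (lt_of_d2 c)
  have m1 : ((0 : ℝ), (0 : ℝ)) ∈ unitSquare := by simp [unitSquare]
  have m2 : ((1 : ℝ), 2 - Real.sqrt 3) ∈ unitSquare :=
    ⟨⟨by norm_num, by norm_num⟩, ⟨by simp only; linarith, by simp only; linarith⟩⟩
  have m3 : ((2 - Real.sqrt 3, (1 : ℝ))) ∈ unitSquare := ⟨m2.2, m2.1⟩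
  have e1 : d2 (0, 0) (1, 2 - Real.sqrt 3) = Real.sqrt 6 - Real.sqrt 2 :=
    d2_eq (by simp only; nlinarith)
  have e2 : d2 (0, 0) (2 - Real.sqrt 3, 1) = Real.sqrt 6 - Real.sqrt 2 :=
    d2_eq (by simp only; nlinarith)
  have e3 : d2 (1, 2 - Real.sqrt 3) (2 - Real.sqrt 3, 1) = Real.sqrt 6 - Real.sqrt 2 :=
    d2_eq (by simp only; nlinarith)
  refine ⟨A, ⟨m1, m2, m3, e1, e2, e3⟩, ⟨⟨_, _, _, m1, m2, m3, ?_⟩, ?_⟩, ?_⟩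
  · rw [e1, e2, e3]; simp
  · rintro v ⟨p, q, r, hp, hq, hr, rfl⟩
    rcases A p q r hp hq hr with h | h | h
    · exact (min_le_left _ _).trans ((min_le_left _ _).trans h)
    · exact (min_le_left _ _).trans ((min_le_right _ _).trans h)
    · exact (min_le_right _ _).trans h
  · rintro ⟨x, hx⟩
    have hi : Irrational (Real.sqrt 3) := by
      simpa using Nat.Prime.irrational_sqrt Nat.prime_three
    apply hi
    refine ⟨(8 - x ^ 2) / 4, ?_⟩
    have := s62_sq
    rw [← hx] at this
    push_cast
    linarith
end

section
/- Let R₁, …, Rₙ (n ≥ 2) be axis-aligned rectangles in ℝ² all of whose corner coordinates are rational numbers. Then the optimal value δ*_∞ for the L_∞ distance is a rational number. -/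
open Set

lemma perturb_le (f : ℝ →ₗ[ℚ] ℚ) {a b : ℝ} (h : a ≤ b) :
    ∀ᶠ e : ℝ in nhdsWithin 0 (Ioi 0), a + e * f a ≤ b + e * f b := by
  rcases h.eq_or_lt with h | h
  · subst h; simp
  · have h1 : Continuous fun e : ℝ => a + e * f a := by fun_prop
    have h2 : Continuous fun e : ℝ => b + e * f b := by fun_prop
    have := (h1.tendsto 0).eventually_lt (h2.tendsto 0) (by simpa using h)
    exact (this.filter_mono nhdsWithin_le_nhds).mono fun e he => he.le

lemma exists_fun (d : ℝ) (hd : ¬ ∃ q : ℚ, d = (q : ℝ)) :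
    ∃ f : ℝ →ₗ[ℚ] ℚ, (∀ q : ℚ, f (q : ℝ) = 0) ∧ 0 < f d := by
  have hn : d ∉ Submodule.span ℚ {(1 : ℝ)} := by
    intro h
    obtain ⟨q, hq⟩ := Submodule.mem_span_singleton.1 h
    exact hd ⟨q, by rw [← hq, Rat.smul_def, mul_one]⟩
  obtain ⟨f, hf, hk⟩ := Submodule.exists_le_ker_of_notMem hn
  have h0 : ∀ q : ℚ, f (q : ℝ) = 0 := by
    intro q
    apply hk
    exact Submodule.mem_span_singleton.2 ⟨q, by rw [Rat.smul_def, mul_one]⟩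
  rcases lt_or_gt_of_ne hf with h | h
  · exact ⟨-f, by simpa using h0, by simpa using h⟩
  · exact ⟨f, h0, h⟩

lemma le_dinf_iff (v : ℝ) (p q : ℝ × ℝ) : v ≤ dinf p q ↔
    (q.1 + v ≤ p.1 ∨ p.1 + v ≤ q.1) ∨ (q.2 + v ≤ p.2 ∨ p.2 + v ≤ q.2) := by
  unfold dinf
  rw [le_max_iff, le_abs, le_abs]
  constructor <;> rintro ((h | h) | (h | h))
  · exact .inl (.inl (by linarith))
  · exact .inl (.inr (by linarith))
  · exact .inr (.inl (by linarith))
  · exact .inr (.inr (by linarith))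
  · exact .inl (.inl (by linarith))
  · exact .inl (.inr (by linarith))
  · exact .inr (.inl (by linarith))
  · exact .inr (.inr (by linarith))

lemma le_minPairDist_iff {n : ℕ} (hn : 2 ≤ n) (p : Fin n → ℝ × ℝ) (v : ℝ) :
    v ≤ minPairDist dinf p ↔ ∀ i j, i ≠ j → v ≤ dinf (p i) (p j) := by
  unfold minPairDist
  have hb : BddBelow {x : ℝ | ∃ i j : Fin n, i ≠ j ∧ x = dinf (p i) (p j)} :=
    ⟨0, by rintro x ⟨i, j, -, rfl⟩; exact le_max_of_le_left (abs_nonneg _)⟩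
  rw [le_csInf_iff hb ⟨_, ⟨0, by omega⟩, ⟨1, by omega⟩, by simp, rfl⟩]
  constructor
  · intro h i j hij
    exact h _ ⟨i, j, hij, rfl⟩
  · rintro h x ⟨i, j, hij, rfl⟩
    exact h i j hij

theorem stmt14 (n : ℕ) (hn : 2 ≤ n) (lo hi bo tp : Fin n → ℚ)
    (hx : ∀ i, lo i ≤ hi i) (hy : ∀ i, bo i ≤ tp i) :
    ∃ q : ℚ,
      sSup (selVals dinf fun i => rect (lo i : ℝ) (hi i : ℝ) (bo i : ℝ) (tp i : ℝ))
        = (q : ℝ) := by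
  set R : Fin n → Set (ℝ × ℝ) :=
    fun i => rect (lo i : ℝ) (hi i : ℝ) (bo i : ℝ) (tp i : ℝ) with hR
  have hK : IsCompact (Set.pi univ R) :=
    isCompact_univ_pi fun i => isCompact_Icc.prod isCompact_Icc
  have hc : ∀ i j : Fin n, Continuous fun p : Fin n → ℝ × ℝ => dinf (p i) (p j) := by
    intro i j
    unfold dinf
    fun_prop
  have hne : (Set.pi univ R).Nonempty := by
    refine ⟨fun i => ((lo i : ℝ), (bo i : ℝ)), fun i _ => ⟨⟨le_rfl, ?_⟩, ⟨le_rfl, ?_⟩⟩⟩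
    · exact Rat.cast_le.2 (hx i)
    · exact Rat.cast_le.2 (hy i)
  let i0 : Fin n := ⟨0, by omega⟩
  let i1 : Fin n := ⟨1, by omega⟩
  have h01 : i0 ≠ i1 := by simp [i0, i1]
  obtain ⟨M, hM⟩ := hK.bddAbove_image (hc i0 i1).continuousOn
  have hM' : ∀ p ∈ Set.pi univ R, dinf (p i0) (p i1) ≤ M :=
    fun p hp => hM ⟨p, hp, rfl⟩
  have hnn : ∀ p q : ℝ × ℝ, 0 ≤ dinf p q :=
    fun p q => le_max_of_le_left (abs_nonneg _)
  let C : Set ((Fin n → ℝ × ℝ) × ℝ) := (Set.pi univ R ×ˢ Icc 0 M) ∩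
    {z | ∀ i j, i ≠ j → z.2 ≤ dinf (z.1 i) (z.1 j)}
  have hC : IsCompact C := by
    apply (hK.prod isCompact_Icc).inter_right
    simp only [Set.ofPred_forall]
    refine isClosed_iInter fun i => isClosed_iInter fun j => isClosed_iInter fun _ => ?_
    exact isClosed_le continuous_snd ((hc i j).comp continuous_fst)
  have hCne : C.Nonempty := by
    obtain ⟨p, hp⟩ := hne
    exact ⟨(p, 0), ⟨hp, le_rfl, (hnn _ _).trans (hM' p hp)⟩, fun i j _ => hnn _ _⟩
  obtain ⟨⟨p, d⟩, hpd, hmax⟩ := hC.exists_isMaxOn hCne continuous_snd.continuousOn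
  have hd0 : 0 ≤ d := hpd.1.2.1
  have hmax' : ∀ p' ∈ Set.pi univ R, ∀ v : ℝ, 0 ≤ v →
      (∀ i j, i ≠ j → v ≤ dinf (p' i) (p' j)) → v ≤ d := by
    intro p' hp' v hv h
    exact hmax (a := (p', v)) ⟨⟨hp', hv, (h _ _ h01).trans (hM' _ hp')⟩, h⟩
  have hG : IsGreatest (selVals dinf R) d := by
    have hub : d ∈ upperBounds (selVals dinf R) := by
      rintro v ⟨p', hp', rfl⟩
      exact hmax' p' (fun i _ => hp' i) _
        ((le_minPairDist_iff hn p' 0).2 fun i j _ => hnn _ _)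
        ((le_minPairDist_iff hn p' _).1 le_rfl)
    refine ⟨⟨p, fun i => hpd.1.1 i trivial, le_antisymm ?_ ?_⟩, hub⟩
    · exact (le_minPairDist_iff hn p d).2 hpd.2
    · exact hub ⟨p, fun i => hpd.1.1 i trivial, rfl⟩
  rw [hG.csSup_eq]
  by_contra hq
  obtain ⟨f, hf0, hfd⟩ := exists_fun d hq
  have key : ∀ᶠ e : ℝ in nhdsWithin 0 (Ioi 0),
      (∀ i, ((p i).1 + e * f (p i).1, (p i).2 + e * f (p i).2) ∈ R i) ∧
      ∀ i j, i ≠ j → d + e * f d ≤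
        dinf ((p i).1 + e * f (p i).1, (p i).2 + e * f (p i).2)
          ((p j).1 + e * f (p j).1, (p j).2 + e * f (p j).2) := by
    refine Filter.Eventually.and (Filter.eventually_all.2 fun i => ?_)
      (Filter.eventually_all.2 fun i => Filter.eventually_all.2 fun j =>
        Filter.eventually_all.2 fun hij => ?_)
    · obtain ⟨⟨h1, h2⟩, ⟨h3, h4⟩⟩ := hpd.1.1 i trivial
      filter_upwards [perturb_le f h1, perturb_le f h2, perturb_le f h3, perturb_le f h4]
        with e e1 e2 e3 e4
      simp only [hf0, Rat.cast_zero, mul_zero, add_zero] at e1 e2 e3 e4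
      exact ⟨⟨e1, e2⟩, ⟨e3, e4⟩⟩
    · have h := hpd.2 i j hij
      simp only [le_dinf_iff] at h ⊢
      rcases h with (h | h) | (h | h)
      all_goals
        filter_upwards [perturb_le f h] with e he
        rw [map_add, Rat.cast_add] at he
      · exact .inl (.inl (by linarith))
      · exact .inl (.inr (by linarith))
      · exact .inr (.inl (by linarith))
      · exact .inr (.inr (by linarith))
  obtain ⟨e, ⟨h1, h2⟩, he⟩ := (key.and self_mem_nhdsWithin).exists
  have he' : (0 : ℝ) < e := he
  have hpos : 0 < e * (f d : ℝ) := mul_pos he' (by exact_mod_cast hfd)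
  have := hmax' _ (fun i _ => h1 i) (d + e * f d) (by linarith) h2
  linarith
end
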